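/- arXiv:math/0603284 — 4 statements merged into one kernel-verified Lean document; each statement's English description precedes it below -/
import Mathlib

section
/- Consider the market model with a bank account: let (S_t^b)_{t=0}^T, (S_t^a)_{t=0}^T be ℝ^d-valued adapted processes with 0 < S_t^{b,i} ≤ S_t^{a,i} for i=2,…,d and S_t^{b,1}=S_t^{a,1}=1, and let (Π_t) be the associated bid-ask process π_t^{ij}=S_t^{a,j}/S_t^{b,i} (i≠j), π_t^{ii}=1. Then NA^r holds if and only if there exist a probability measure Q equivalent to P and a (d−1)-dimensional Q-martingale S=(S_t)_{t=0}^T, S_t=(S_t^2,…,S_t^d), adapted to (𝔉_t), such that S_t^i(ω) ∈ ri [S_t^{b,i}(ω), S_t^{a,i}(ω)] for a.e. ω, for all i=2,…,d and t=0,…,T. -/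
open MeasureTheory Set

/-- A bid-ask matrix: positive entries, ones on the diagonal, and
`π^{ij} ≤ π^{ik} π^{kj}`. -/
def IsBidAskMatrix {d : ℕ} (M : Matrix (Fin d) (Fin d) ℝ) : Prop :=
  (∀ i j, 0 < M i j) ∧ (∀ i, M i i = 1) ∧ ∀ i j k, M i j ≤ M i k * M k j

/-- The smallest closed convex cone containing a set `S ⊆ ℝ^d`. -/
def generatedClosedCone {d : ℕ} (S : Set (Fin d → ℝ)) : Set (Fin d → ℝ) :=
  ⋂₀ {C | S ⊆ C ∧ IsClosed C ∧ Convex ℝ C ∧ ∀ x ∈ C, ∀ c : ℝ, 0 ≤ c → c • x ∈ C}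

/-- The solvency cone `K(Π)`: the closed convex cone generated by the standard
basis vectors `e_i` and the vectors `π^{ij} e_i − e_j`. -/
def solvencyCone {d : ℕ} (M : Matrix (Fin d) (Fin d) ℝ) : Set (Fin d → ℝ) :=
  generatedClosedCone
    ((Set.range fun i : Fin d => (Pi.single i 1 : Fin d → ℝ)) ∪
      {v | ∃ i j : Fin d, v = M i j • (Pi.single i 1 : Fin d → ℝ) - Pi.single j 1})

/-- `ξ ∈ L⁰(G, ℋ)`: `ξ` is `ℋ`-measurable and `ξ(ω) ∈ G(ω)` for a.e. `ω`. -/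
def MemL0 {Ω : Type*} {d : ℕ} {m : MeasurableSpace Ω} (P : Measure Ω)
    (H : MeasurableSpace Ω) (G : Ω → Set (Fin d → ℝ)) (ξ : Ω → Fin d → ℝ) : Prop :=
  Measurable[H] ξ ∧ ∀ᵐ ω ∂P, ξ ω ∈ G ω

/-- `x ∈ A_T(Π) = Σ_{t=0}^T L⁰(−K_t, 𝔉_t)`: the attainable terminal portfolios
of self-financing strategies for the bid-ask process `Π`. -/
def MemAttainable {Ω : Type*} {d T : ℕ} {m : MeasurableSpace Ω} (P : Measure Ω)
    (ℱ : Filtration (Fin (T + 1)) m)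
    (Pi_ : Fin (T + 1) → Ω → Matrix (Fin d) (Fin d) ℝ) (x : Ω → Fin d → ℝ) : Prop :=
  ∃ xs : Fin (T + 1) → Ω → Fin d → ℝ,
    (∀ t, MemL0 P (ℱ t) (fun ω => -(solvencyCone (Pi_ t ω))) (xs t)) ∧
    ∀ ω, (∑ t, xs t ω) = x ω

/-- The robust no-arbitrage condition NAʳ for a bid-ask process `Π`. -/
def RobustNoArbitrage {Ω : Type*} {d T : ℕ} {m : MeasurableSpace Ω} (P : Measure Ω)
    (ℱ : Filtration (Fin (T + 1)) m)
    (Pi_ : Fin (T + 1) → Ω → Matrix (Fin d) (Fin d) ℝ) : Prop :=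
  ∃ Pi' : Fin (T + 1) → Ω → Matrix (Fin d) (Fin d) ℝ,
    (∀ t i j, Measurable[ℱ t] fun ω => Pi' t ω i j) ∧
    (∀ t ω, IsBidAskMatrix (Pi' t ω)) ∧
    (∀ t i j, ∀ᵐ ω ∂P,
      Icc (1 / Pi' t ω j i) (Pi' t ω i j) ⊆
        intrinsicInterior ℝ (Icc (1 / Pi_ t ω j i) (Pi_ t ω i j))) ∧
    ∀ x : Ω → Fin d → ℝ, MemAttainable P ℱ Pi' x →
      MemL0 P (ℱ (Fin.last T)) (fun _ => {v | ∀ i, 0 ≤ v i}) x →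
      ∀ᵐ ω ∂P, x ω = 0

/-!
A trade is acceptable when its acquisition cost in cash, computed at bid and ask prices, is
nonpositive. If NAʳ holds, take prices halfway between the given ones and the tighter
arbitrage-free ones. For these, a strategy with outcome zero consists of trades that can be undone:
otherwise it would be an arbitrage at the tighter prices. Hence the closedness argument of
Kabanov–Stricker and Schachermayer applies, by induction over time: the set of superhedgeable
claims is closed in probability. Separating it from the positive cash amounts in `L²` (Kreps–Yan)
gives a strictly positive dual density, whose conditional expectations in units of cash form a
martingale pricing every trade nonpositively, so that its prices lie between the halfway bid and ask
prices. These lie in the relative interiors of the original intervals, hence so does the martingale.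

Conversely, the exchange rates of the martingale itself are frictionless prices. The value of a
strategy at these rates is a generalized supermartingale starting from a nonpositive value, so a
nonnegative outcome vanishes.
-/

section Measurability

open Filter Topology

variable {Ω : Type*}

lemma exists_countable_ae_cover {m : MeasurableSpace Ω} (P : Measure Ω) [IsFiniteMeasure P]
    {ι : Type*} [Nonempty ι] (B : ι → Set Ω) (hB : ∀ i, MeasurableSet (B i)) :
    ∃ u : ℕ → ι, ∀ j, B j ≤ᵐ[P] ⋃ n, B (u n) := by
  let cover (u : ℕ → ι) : Set Ω := ⋃ n, B (u n)
  obtain ⟨p, -, hp, hp_mem⟩ := exists_seq_tendsto_sSup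
    (range_nonempty fun u => P (cover u)) (OrderTop.bddAbove _)
  choose u hu using hp_mem
  let w (n : ℕ) : ι := u n.unpair.1 n.unpair.2
  have cover_subset (k : ℕ) : cover (u k) ⊆ cover w :=
    iUnion_subset fun n => subset_iUnion_of_subset (Nat.pair k n) (by simp [w])
  have cover_max (v : ℕ → ι) : P (cover v) ≤ P (cover w) := by
    refine (le_sSup (mem_range_self v)).trans (le_of_tendsto' hp fun k => ?_)
    exact (hu k).symm.trans_le (measure_mono (cover_subset k))
  refine ⟨w, fun j => ?_⟩
  have cover_insert : cover (fun n => Nat.casesOn n j w) = B j ∪ cover w := by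
    ext ω
    simp only [cover, mem_iUnion, mem_union]
    exact ⟨fun ⟨n, h⟩ => by cases n with
      | zero => exact Or.inl h
      | succ n => exact Or.inr ⟨n, h⟩,
      fun h => h.elim (fun h => ⟨0, h⟩) fun ⟨n, h⟩ => ⟨n + 1, h⟩⟩
  have h_eq : (cover w : Set Ω) =ᵐ[P] (B j ∪ cover w : Set Ω) :=
    ae_eq_of_subset_of_measure_ge subset_union_right (cover_insert ▸ cover_max _)
      (MeasurableSet.iUnion fun n => hB _).nullMeasurableSet (measure_ne_top _ _)
  exact subset_union_left.eventuallyLE.trans h_eq.symm.le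

variable {G : MeasurableSpace Ω}

lemma measurable_apply_of_countable {κ β : Type*} [MeasurableSpace κ] [Countable κ]
    [MeasurableSingletonClass κ] [MeasurableSpace β] {f : κ → Ω → β}
    (hf : ∀ k, Measurable (f k)) {τ : Ω → κ} (hτ : Measurable τ) :
    Measurable fun ω => f (τ ω) ω :=
  (measurable_from_prod_countable_right (f := fun p : κ × Ω => f p.1 p.2) hf).comp
    (hτ.prodMk measurable_id)

lemma exists_measurable_find {p : Ω → ℕ → Prop} (hp : ∀ ω, ∃ n, p ω n)
    (hm : ∀ n, MeasurableSet {ω | p ω n}) : ∃ τ : Ω → ℕ, Measurable τ ∧ ∀ ω, p ω (τ ω) := by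
  classical
  exact ⟨fun ω => Nat.find (hp ω), measurable_find hp hm, fun ω => Nat.find_spec (hp ω)⟩

/-- A strictly increasing sequence of measurable random indices along which `x` converges pointwise
to a measurable limit. -/
def HasRandomSubseqLimit (G : MeasurableSpace Ω) {E : Type*} [TopologicalSpace E]
    [MeasurableSpace E] (x : ℕ → Ω → E) : Prop :=
  ∃ τ : ℕ → Ω → ℕ, (∀ k, Measurable[G] (τ k)) ∧ (∀ ω, StrictMono fun k => τ k ω) ∧
    ∃ y : Ω → E, Measurable[G] y ∧ ∀ ω, Tendsto (fun k => x (τ k ω) ω) atTop (𝓝 (y ω))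

lemma exists_random_subseq_tendsto_limsup {x : ℕ → Ω → ℝ} (hx : ∀ n, Measurable (x n))
    (hb : ∀ ω, Bornology.IsBounded (range fun n => x n ω)) : HasRandomSubseqLimit G x := by
  let L (ω : Ω) : ℝ := limsup (fun n => x n ω) atTop
  have hLm : Measurable L := Measurable.limsup hx
  have h_near (k p : ℕ) (ω : Ω) : ∃ n, p < n ∧ |x n ω - L ω| < 1 / ((k : ℝ) + 1) := by
    have hk : (0 : ℝ) < 1 / ((k : ℝ) + 1) := by positivity
    have h_above : IsBoundedUnder (· ≤ ·) atTop fun n => x n ω :=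
      (hb ω).bddAbove.isBoundedUnder_of_range
    have h_below : IsBoundedUnder (· ≥ ·) atTop fun n => x n ω :=
      (hb ω).bddBelow.isBoundedUnder_of_range
    have h_freq : ∃ᶠ n in atTop, L ω - 1 / ((k : ℝ) + 1) < x n ω :=
      frequently_lt_of_lt_limsup h_below.isCoboundedUnder_le (sub_lt_self (L ω) hk)
    have h_ev : ∀ᶠ n in atTop, x n ω < L ω + 1 / ((k : ℝ) + 1) :=
      eventually_lt_of_limsup_lt (lt_add_of_pos_right (L ω) hk) h_above
    obtain ⟨n, h_lt, h_gt, hn⟩ := (h_freq.and_eventually (h_ev.and (eventually_gt_atTop p))).exists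
    exact ⟨n, hn, abs_lt.2 ⟨by linarith, by linarith⟩⟩
  choose σ hσm hσ using fun k p => exists_measurable_find (h_near k p) fun n =>
    (MeasurableSet.const (p < n)).inter
      (measurableSet_lt ((hx n).sub hLm).abs measurable_const)
  let τ : ℕ → Ω → ℕ := fun k ω => Nat.rec 0 (fun k p => σ k p ω) k
  refine ⟨τ, fun k => ?_, fun ω => strictMono_nat_of_lt_succ fun k => (hσ k (τ k ω) ω).1, L, hLm,
    fun ω => ?_⟩
  · induction k with
    | zero => exact measurable_const
    | succ k ih => exact measurable_apply_of_countable (hσm k) ih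
  · rw [← tendsto_add_atTop_iff_nat 1, tendsto_iff_dist_tendsto_zero]
    exact squeeze_zero (fun _ => dist_nonneg) (fun k => (hσ k (τ k ω) ω).2.le)
      tendsto_one_div_add_atTop_nhds_zero_nat

lemma exists_random_subseq_tendsto_pi {ι : Type*} [Finite ι] {x : ℕ → Ω → ι → ℝ}
    (hx : ∀ n, Measurable (x n)) (hb : ∀ ω, Bornology.IsBounded (range fun n => x n ω)) :
    HasRandomSubseqLimit G x := by
  classical
  have := Fintype.ofFinite ι
  suffices h : ∀ s : Finset ι,
      HasRandomSubseqLimit G fun n ω (i : ι) => if i ∈ s then x n ω i else (0 : ℝ) by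
    simpa using h Finset.univ
  intro s
  induction s using Finset.induction_on with
  | empty => exact ⟨fun k _ => k, fun _ => measurable_const, fun _ => strictMono_id, 0,
      measurable_const, fun _ => tendsto_const_nhds⟩
  | insert i s _ ih =>
    obtain ⟨τ, hτm, hτ, y, hym, hy⟩ := ih
    obtain ⟨ρ, hρm, hρ, z, hzm, hz⟩ := exists_random_subseq_tendsto_limsup
      (G := G) (x := fun k ω => x (τ k ω) ω i)
      (fun k => measurable_apply_of_countable (fun n => (hx n).eval) (hτm k))
      fun ω => (Bornology.forall_isBounded_image_eval_iff.2 (hb ω) i).subset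
        (by rintro _ ⟨k, rfl⟩; exact ⟨_, ⟨τ k ω, rfl⟩, rfl⟩)
    refine ⟨fun k ω => τ (ρ k ω) ω, fun k => measurable_apply_of_countable hτm (hρm k),
      fun ω => (hτ ω).comp (hρ ω), fun ω => Function.update (y ω) i (z ω),
      measurable_pi_iff.2 fun j => ?_, fun ω => tendsto_pi_nhds.2 fun j => ?_⟩ <;>
      rcases eq_or_ne j i with rfl | hj
    · simpa only [Function.update_self] using hzm
    · simpa only [Function.update_of_ne hj] using hym.eval
    · simpa using hz ω
    · simpa [hj, Function.comp_def] using ((tendsto_pi_nhds.1 (hy ω)) j).comp (hρ ω).tendsto_atTop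

lemma exists_random_subseq_tendsto {E : Type*} [NormedAddCommGroup E] [NormedSpace ℝ E]
    [FiniteDimensional ℝ E] [MeasurableSpace E] [BorelSpace E] {x : ℕ → Ω → E}
    (hx : ∀ n, Measurable (x n)) (hb : ∀ ω, Bornology.IsBounded (range fun n => x n ω)) :
    HasRandomSubseqLimit G x := by
  let L := (Module.finBasis ℝ E).equivFunL
  obtain ⟨τ, hτm, hτ, y, hym, hy⟩ := exists_random_subseq_tendsto_pi (G := G)
    (x := fun n ω => L (x n ω)) (fun n => L.continuous.measurable.comp (hx n))
    fun ω => by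
      simpa only [← range_comp, Function.comp_def] using L.lipschitz.isBounded_image (hb ω)
  refine ⟨τ, hτm, hτ, fun ω => L.symm (y ω), L.symm.continuous.measurable.comp hym, fun ω => ?_⟩
  simpa only [Function.comp_def, L.symm_apply_apply] using
    (L.symm.continuous.tendsto (y ω)).comp (hy ω)

lemma exists_ae_norm_le_norm_add_one {E : Type*} [NormedAddCommGroup E] [MeasurableSpace E]
    [OpensMeasurableSpace E] {m : MeasurableSpace Ω} (hG : G ≤ m)
    (P : Measure Ω) [IsFiniteMeasure P] {R : Set (Ω → E)} (hR : R.Nonempty)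
    (hR_meas : ∀ x ∈ R, Measurable[G] x)
    (hR_paste : ∀ x : ℕ → Ω → E, (∀ n, x n ∈ R) → ∀ τ : Ω → ℕ, Measurable[G] τ →
      (fun ω => x (τ ω) ω) ∈ R) :
    ∃ x ∈ R, ∀ x' ∈ R, ∀ᵐ ω ∂P, ‖x ω‖ ≤ ‖x' ω‖ + 1 := by
  have := hR.to_subtype
  have h_norm (x : R) : Measurable[G] fun ω => ‖(x : Ω → E) ω‖ :=
    measurable_norm.comp (hR_meas x x.2)
  choose u hu using fun k : ℕ => exists_countable_ae_cover P
    (fun x : R => {ω | ‖(x : Ω → E) ω‖ ≤ (k : ℝ)})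
    fun x => hG _ (measurableSet_le (h_norm x) measurable_const)
  let v (j : ℕ) : R := u j.unpair.1 j.unpair.2
  let level (x : R) (ω : Ω) : ℕ := ⌈‖(x : Ω → E) ω‖⌉₊
  have h_level (x : R) : Measurable[G] (level x) := Nat.measurable_ceil.comp (h_norm x)
  obtain ⟨τ, hτm, hτ⟩ := exists_measurable_find (G := G)
    (p := fun ω j => ∀ i, level (v j) ω ≤ level (v i) ω)
    (fun ω => ⟨Function.argmin fun j => level (v j) ω,
      fun i => Function.argmin_le (fun j => level (v j) ω) i⟩)
    fun j => by
      rw [ofPred_forall]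
      exact MeasurableSet.iInter fun i => measurableSet_le (h_level _) (h_level _)
  refine ⟨_, hR_paste (fun j => v j) (fun j => (v j).2) τ hτm, fun x' hx' => ?_⟩
  filter_upwards [ae_all_iff.2 fun k => hu k ⟨x', hx'⟩] with ω hω
  obtain ⟨n, hn⟩ := mem_iUnion.1 (hω _ (Nat.le_ceil ‖x' ω‖))
  calc ‖(v (τ ω) : Ω → E) ω‖ ≤ level (v (τ ω)) ω := Nat.le_ceil _
    _ ≤ ⌈‖x' ω‖⌉₊ := by
      refine Nat.cast_le.2 ((hτ ω (Nat.pair ⌈‖x' ω‖⌉₊ n)).trans (Nat.ceil_le.2 ?_))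
      simpa only [v, Nat.unpair_pair, mem_ofPred_eq] using hn
    _ ≤ ‖x' ω‖ + 1 := (Nat.ceil_lt_add_one (norm_nonneg _)).le

end Measurability

section RadialShrink

open Filter Topology

variable {E : Type*} [NormedAddCommGroup E] [NormedSpace ℝ E]

/-- The radial contraction of a normed space onto its open unit ball. It replaces unbounded random
vectors by bounded ones without changing their directions. -/
noncomputable def radialShrink (v : E) : E := (1 + ‖v‖)⁻¹ • v

lemma norm_radialShrink (v : E) : ‖radialShrink v‖ = 1 - (1 + ‖v‖)⁻¹ := by
  have h : 0 < 1 + ‖v‖ := by positivity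
  rw [radialShrink, norm_smul, Real.norm_of_nonneg (inv_nonneg.2 h.le)]
  field_simp
  ring

lemma norm_radialShrink_le_one (v : E) : ‖radialShrink v‖ ≤ 1 := by
  rw [norm_radialShrink, sub_le_self_iff]
  positivity

lemma continuous_radialShrink : Continuous (radialShrink : E → E) :=
  ((continuous_const.add continuous_norm).inv₀
    fun v => (add_pos_of_pos_of_nonneg one_pos (norm_nonneg v)).ne').smul continuous_id

variable {x h : ℕ → E} {y g : E}

lemma tendsto_inv_one_add_norm_of_radialShrink
    (hx : Tendsto (fun n => radialShrink (x n)) atTop (𝓝 y)) :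
    Tendsto (fun n => (1 + ‖x n‖)⁻¹) atTop (𝓝 (1 - ‖y‖)) := by
  simpa only [norm_radialShrink, sub_sub_cancel] using hx.norm.const_sub 1

lemma tendsto_of_tendsto_radialShrink
    (hx : Tendsto (fun n => radialShrink (x n)) atTop (𝓝 y)) (hy : ‖y‖ ≠ 1) :
    Tendsto x atTop (𝓝 ((1 - ‖y‖)⁻¹ • y)) := by
  refine (((tendsto_inv_one_add_norm_of_radialShrink hx).inv₀ (sub_ne_zero.2 hy.symm)).smul
    hx).congr fun n => ?_
  rw [inv_inv, radialShrink, smul_inv_smul₀ (by positivity)]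

lemma tendsto_inv_one_add_norm_smul_of_tendsto_add
    (hx : Tendsto (fun n => radialShrink (x n)) atTop (𝓝 y)) (hy : ‖y‖ = 1)
    (hg : Tendsto (fun n => x n + h n) atTop (𝓝 g)) :
    Tendsto (fun n => (1 + ‖x n‖)⁻¹ • h n) atTop (𝓝 (-y)) := by
  have h_lim := ((tendsto_inv_one_add_norm_of_radialShrink hx).smul hg).sub hx
  simpa only [hy, sub_self, zero_smul, zero_sub, smul_add, radialShrink, add_sub_cancel_left]
    using h_lim

lemma norm_limit_radialShrink_ne_one
    (hx : Tendsto (fun n => radialShrink (x n)) atTop (𝓝 y))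
    (h_near_min : ∀ n, ‖x n‖ ≤ ‖x n - (1 + ‖x n‖) • y‖ + 1) : ‖y‖ ≠ 1 := by
  intro hy
  have h_shrink (n : ℕ) : ‖radialShrink (x n)‖ ≤ ‖radialShrink (x n) - y‖ + (1 + ‖x n‖)⁻¹ := by
    have h_pos : 0 < 1 + ‖x n‖ := by positivity
    have h_sub : radialShrink (x n) - y = (1 + ‖x n‖)⁻¹ • (x n - (1 + ‖x n‖) • y) := by
      rw [smul_sub, inv_smul_smul₀ h_pos.ne', radialShrink]
    rw [h_sub, radialShrink, norm_smul, norm_smul, Real.norm_of_nonneg (inv_nonneg.2 h_pos.le),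
      ← mul_add_one]
    exact mul_le_mul_of_nonneg_left (h_near_min n) (inv_nonneg.2 h_pos.le)
  have h_le := le_of_tendsto_of_tendsto' hx.norm
    ((hx.sub_const y).norm.add (tendsto_inv_one_add_norm_of_radialShrink hx)) h_shrink
  norm_num [hy] at h_le

end RadialShrink

section ClosedCones

open Filter Topology
open scoped Pointwise

variable {Ω E : Type*} [NormedAddCommGroup E] [NormedSpace ℝ E] [MeasurableSpace E]

/-- A set `A` of `F`-measurable random vectors which is a convex cone over the nonnegative
`G`-measurable scalars and is closed under a.e. convergence of sequences, as are the sets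
`L⁰(K, F)` for random closed convex cones `K`. -/
structure IsClosedL0Cone (G F : MeasurableSpace Ω) {m : MeasurableSpace Ω} (P : Measure Ω)
    (A : Set (Ω → E)) : Prop where
  measurable : ∀ {x}, x ∈ A → Measurable[F] x
  zero_mem : 0 ∈ A
  add_mem : ∀ {x y}, x ∈ A → y ∈ A → x + y ∈ A
  smul_mem : ∀ {c : Ω → ℝ} {x}, Measurable[G] c → 0 ≤ c → x ∈ A → c • x ∈ A
  mem_of_tendsto_ae : ∀ {x : ℕ → Ω → E} {y}, (∀ n, x n ∈ A) → Measurable[F] y →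
    (∀ᵐ ω ∂P, Tendsto (fun n => x n ω) atTop (𝓝 (y ω))) → y ∈ A

namespace IsClosedL0Cone

variable {G F m : MeasurableSpace Ω} {P : Measure Ω} {A C : Set (Ω → E)}

lemma congr_ae (hA : IsClosedL0Cone G F P A) {x y : Ω → E} (hx : x ∈ A) (hy : Measurable[F] y)
    (hxy : x =ᵐ[P] y) : y ∈ A :=
  hA.mem_of_tendsto_ae (fun _ => hx) hy (hxy.mono fun _ h => h ▸ tendsto_const_nhds)

lemma mono {G' : MeasurableSpace Ω} (hA : IsClosedL0Cone G F P A) (h : G' ≤ G) :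
    IsClosedL0Cone G' F P A where
  __ := hA
  smul_mem hc := hA.smul_mem (hc.mono h le_rfl)

lemma sum_mem (hA : IsClosedL0Cone G F P A) {κ : Type*} {s : Finset κ} {x : κ → Ω → E}
    (hx : ∀ k ∈ s, x k ∈ A) : ∑ k ∈ s, x k ∈ A :=
  Finset.sum_induction _ (· ∈ A) (fun _ _ => hA.add_mem) hA.zero_mem hx

lemma indicator_mem (hA : IsClosedL0Cone G F P A) {D : Set Ω} (hD : MeasurableSet[G] D)
    {x : Ω → E} (hx : x ∈ A) : D.indicator x ∈ A := by
  have h_smul : D.indicator x = D.indicator (fun _ => (1 : ℝ)) • x := by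
    ext ω
    by_cases h : ω ∈ D <;> simp [h]
  rw [h_smul]
  exact hA.smul_mem (Measurable.indicator measurable_const hD)
    (indicator_nonneg fun _ _ => zero_le_one) hx

lemma comap [BorelSpace E] {E' : Type*} [NormedAddCommGroup E'] [NormedSpace ℝ E']
    [MeasurableSpace E'] [BorelSpace E'] {A : Set (Ω → E')} (hA : IsClosedL0Cone G F P A)
    (L : E ≃L[ℝ] E') : IsClosedL0Cone G F P {x : Ω → E | L ∘ x ∈ A} where
  measurable {x} hx := by
    simpa only [Function.comp_def, L.symm_apply_apply]
      using L.symm.continuous.measurable.comp (hA.measurable hx)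
  zero_mem := by
    rw [mem_ofPred_eq, map_comp_zero]
    exact hA.zero_mem
  add_mem hx hy := by
    rw [mem_ofPred_eq, map_comp_add]
    exact hA.add_mem hx hy
  smul_mem {c x} hc hc0 hx := by
    have h_smul : L ∘ (c • x) = c • L ∘ x := funext fun ω => map_smul L (c ω) (x ω)
    rw [mem_ofPred_eq, h_smul]
    exact hA.smul_mem hc hc0 hx
  mem_of_tendsto_ae hx hy hxy := hA.mem_of_tendsto_ae hx (L.continuous.measurable.comp hy)
    (hxy.mono fun ω h => (L.continuous.tendsto _).comp h)

lemma paste (hA : IsClosedL0Cone G F P A) (hGF : G ≤ F) {x : ℕ → Ω → E} (hx : ∀ n, x n ∈ A)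
    {τ : Ω → ℕ} (hτ : Measurable[G] τ) : (fun ω => x (τ ω) ω) ∈ A := by
  let c (n : ℕ) (ω : Ω) : ℝ := if τ ω = n then 1 else 0
  have h_trunc (N : ℕ) : ∑ n ∈ Finset.range N, c n • x n ∈ A :=
    hA.sum_mem fun n _ => hA.smul_mem
      (Measurable.ite (hτ (measurableSet_singleton n)) measurable_const measurable_const)
      (fun ω => by dsimp only [c]; split_ifs <;> simp) (hx n)
  refine hA.mem_of_tendsto_ae h_trunc
    (measurable_apply_of_countable (fun n => hA.measurable (hx n)) (hτ.mono hGF le_rfl))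
    (ae_of_all _ fun ω => tendsto_const_nhds.congr' ?_)
  filter_upwards [eventually_gt_atTop (τ ω)] with N hN
  simp [c, Finset.sum_apply, hN]

variable [BorelSpace E]

lemma exists_near_minimal_decomposition [IsFiniteMeasure P] (hG : G ≤ m)
    (hC : IsClosedL0Cone G G P C) (hA : IsClosedL0Cone G m P A)
    (hCA : ∀ y ∈ C, -y ∈ A → -y ∈ C ∧ y ∈ A) {g : Ω → E} (hg : g ∈ C + A) :
    ∃ x ∈ C, ∃ h ∈ A, x + h = g ∧
      ∀ z ∈ C, -z ∈ A → ∀ᵐ ω ∂P, ‖x ω‖ ≤ ‖x ω - z ω‖ + 1 := by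
  obtain ⟨x₀, hx₀, h₀, hh₀, rfl⟩ := hg
  obtain ⟨x, ⟨hxC, hxA⟩, hx⟩ := exists_ae_norm_le_norm_add_one hG P
    (R := {x | x ∈ C ∧ x₀ + h₀ - x ∈ A}) ⟨x₀, hx₀, by simpa using hh₀⟩
    (fun x hx => hC.measurable hx.1)
    fun x hx τ hτ => ⟨hC.paste le_rfl (fun n => (hx n).1) hτ, hA.paste hG (fun n => (hx n).2) hτ⟩
  refine ⟨x, hxC, _, hxA, add_sub_cancel _ _, fun z hz hz' => ?_⟩
  obtain ⟨h_neg, hzA⟩ := hCA z hz hz'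
  refine hx (x - z) ⟨sub_eq_add_neg x z ▸ hC.add_mem hxC h_neg, ?_⟩
  rw [← sub_add]
  exact hA.add_mem hxA hzA

lemma exists_random_subseq_add_mem [FiniteDimensional ℝ E] (hG : G ≤ m)
    (hC : IsClosedL0Cone G G P C) (hA : IsClosedL0Cone G m P A) {x h : ℕ → Ω → E} {g : Ω → E}
    (hx : ∀ n, x n ∈ C) (hh : ∀ n, h n ∈ A)
    (hg : ∀ᵐ ω ∂P, Tendsto (fun n => x n ω + h n ω) atTop (𝓝 (g ω))) :
    ∃ τ : ℕ → Ω → ℕ, (∀ k, (fun ω => x (τ k ω) ω) ∈ C) ∧ (∀ k, (fun ω => h (τ k ω) ω) ∈ A) ∧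
      (∀ᵐ ω ∂P, Tendsto (fun k => x (τ k ω) ω + h (τ k ω) ω) atTop (𝓝 (g ω))) ∧
      ∃ y : Ω → E, Measurable[G] y ∧
        ∀ ω, Tendsto (fun k => radialShrink (x (τ k ω) ω)) atTop (𝓝 (y ω)) := by
  obtain ⟨τ, hτm, hτ, y, hym, hy⟩ := exists_random_subseq_tendsto (G := G)
    (x := fun n ω => radialShrink (x n ω))
    (fun n => continuous_radialShrink.measurable.comp (hC.measurable (hx n)))
    fun ω => isBounded_iff_forall_norm_le.2
      ⟨1, by rintro _ ⟨n, rfl⟩; exact norm_radialShrink_le_one _⟩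
  exact ⟨τ, fun k => hC.paste le_rfl hx (hτm k), fun k => hA.paste hG hh (hτm k),
    hg.mono fun ω h => h.comp (hτ ω).tendsto_atTop, y, hym, hy⟩

section Recession

variable (hG : G ≤ m) (hC : IsClosedL0Cone G G P C) (hA : IsClosedL0Cone G m P A)
  {x h : ℕ → Ω → E} {g y : Ω → E} (hx : ∀ n, x n ∈ C) (hh : ∀ n, h n ∈ A)
  (hg : ∀ᵐ ω ∂P, Tendsto (fun n => x n ω + h n ω) atTop (𝓝 (g ω))) (hym : Measurable[G] y)
  (hy : ∀ ω, Tendsto (fun n => radialShrink (x n ω)) atTop (𝓝 (y ω)))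

include hG hC hA hx hh hg hym hy

lemma indicator_limit_radialShrink_mem :
    {ω | ‖y ω‖ = 1}.indicator y ∈ C ∧ -{ω | ‖y ω‖ = 1}.indicator y ∈ A := by
  set D : Set Ω := {ω | ‖y ω‖ = 1}
  have hD : MeasurableSet[G] D := measurableSet_eq_fun (measurable_norm.comp hym) measurable_const
  have hDy : Measurable[G] (D.indicator y) := hym.indicator hD
  have h_inv (n : ℕ) : Measurable[G] fun ω => (1 + ‖x n ω‖)⁻¹ :=
    ((measurable_norm.comp (hC.measurable (hx n))).const_add 1).inv
  have h_inv_nonneg (n : ℕ) : 0 ≤ fun ω => (1 + ‖x n ω‖)⁻¹ := fun ω => by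
    dsimp only [Pi.zero_apply]
    positivity
  constructor
  · refine hC.mem_of_tendsto_ae (fun n => hC.indicator_mem hD
      (hC.smul_mem (h_inv n) (h_inv_nonneg n) (hx n))) hDy (ae_of_all _ fun ω => ?_)
    by_cases hω : ω ∈ D
    · simpa only [indicator_of_mem hω, Pi.smul_apply', radialShrink] using hy ω
    · simpa only [indicator_of_notMem hω] using tendsto_const_nhds
  · refine hA.mem_of_tendsto_ae (fun n => hA.indicator_mem hD
      (hA.smul_mem (h_inv n) (h_inv_nonneg n) (hh n))) (hDy.mono hG le_rfl).neg ?_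
    filter_upwards [hg] with ω hgω
    rw [Pi.neg_apply]
    by_cases hω : ω ∈ D
    · simpa only [indicator_of_mem hω, Pi.smul_apply'] using
        tendsto_inv_one_add_norm_smul_of_tendsto_add (hy ω) hω hgω
    · simpa only [indicator_of_notMem hω, neg_zero] using tendsto_const_nhds

lemma ae_norm_limit_radialShrink_ne_one
    (h_near_min : ∀ n, ∀ z ∈ C, -z ∈ A → ∀ᵐ ω ∂P, ‖x n ω‖ ≤ ‖x n ω - z ω‖ + 1) :
    ∀ᵐ ω ∂P, ‖y ω‖ ≠ 1 := by
  obtain ⟨hzC, hzA⟩ := indicator_limit_radialShrink_mem hG hC hA hx hh hg hym hy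
  set z := {ω | ‖y ω‖ = 1}.indicator y
  have h_near_min_z (n : ℕ) : ∀ᵐ ω ∂P, ‖x n ω‖ ≤ ‖x n ω - (1 + ‖x n ω‖) • z ω‖ + 1 := by
    have h_meas : Measurable[G] fun ω => 1 + ‖x n ω‖ :=
      (measurable_norm.comp (hC.measurable (hx n))).const_add 1
    have h_nonneg : 0 ≤ fun ω => 1 + ‖x n ω‖ := fun ω => by
      dsimp only [Pi.zero_apply]
      positivity
    refine h_near_min n _ (hC.smul_mem h_meas h_nonneg hzC) ?_
    simpa only [Pi.smul_def', smul_neg] using hA.smul_mem h_meas h_nonneg hzA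
  filter_upwards [ae_all_iff.2 h_near_min_z] with ω hω h1
  refine norm_limit_radialShrink_ne_one (hy ω) (fun n => ?_) h1
  simpa only [z, indicator_of_mem (show ω ∈ {ω | ‖y ω‖ = 1} from h1)] using hω n

lemma mem_add_of_tendsto [SecondCountableTopology E] (hg_meas : Measurable[m] g)
    (hy1 : ∀ᵐ ω ∂P, ‖y ω‖ ≠ 1) : g ∈ C + A := by
  let X (ω : Ω) : E := (1 - ‖y ω‖)⁻¹ • y ω
  have hX_meas : Measurable[G] X := ((measurable_norm.comp hym).const_sub 1).inv.smul hym
  have hX : ∀ᵐ ω ∂P, Tendsto (fun n => x n ω) atTop (𝓝 (X ω)) :=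
    hy1.mono fun ω hω => tendsto_of_tendsto_radialShrink (hy ω) hω
  refine ⟨X, hC.mem_of_tendsto_ae hx hX_meas hX, g - X, ?_, add_sub_cancel X g⟩
  refine hA.mem_of_tendsto_ae hh (hg_meas.sub (hX_meas.mono hG le_rfl)) ?_
  filter_upwards [hg, hX] with ω hgω hXω
  simpa only [Pi.sub_apply, add_sub_cancel_left] using hgω.sub hXω

end Recession

lemma add [FiniteDimensional ℝ E] [IsFiniteMeasure P] (hG : G ≤ m) (hC : IsClosedL0Cone G G P C)
    (hA : IsClosedL0Cone G m P A) (hCA : ∀ y ∈ C, -y ∈ A → -y ∈ C ∧ y ∈ A) :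
    IsClosedL0Cone G m P (C + A) where
  measurable := by
    rintro _ ⟨x, hx, h, hh, rfl⟩
    exact ((hC.measurable hx).mono hG le_rfl).add (hA.measurable hh)
  zero_mem := ⟨0, hC.zero_mem, 0, hA.zero_mem, add_zero 0⟩
  add_mem := by
    rintro _ _ ⟨x, hx, h, hh, rfl⟩ ⟨x', hx', h', hh', rfl⟩
    exact ⟨_, hC.add_mem hx hx', _, hA.add_mem hh hh', add_add_add_comm _ _ _ _⟩
  smul_mem := by
    rintro c _ hc hc0 ⟨x, hx, h, hh, rfl⟩
    exact ⟨_, hC.smul_mem hc hc0 hx, _, hA.smul_mem hc hc0 hh,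
      funext fun ω => (smul_add (c ω) (x ω) (h ω)).symm⟩
  mem_of_tendsto_ae {g g'} hg hg' h_lim := by
    choose x hx h hh h_add h_near_min using fun n =>
      exists_near_minimal_decomposition hG hC hA hCA (hg n)
    obtain ⟨τ, hxτ, hhτ, h_limτ, y, hym, hy⟩ := exists_random_subseq_add_mem hG hC hA hx hh
      (h_lim.mono fun ω hω => by simpa only [← h_add, Pi.add_apply] using hω)
    refine mem_add_of_tendsto hG hC hA hxτ hhτ h_limτ hym hy hg' <|
      ae_norm_limit_radialShrink_ne_one hG hC hA hxτ hhτ h_limτ hym hy fun k z hz hz' => ?_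
    filter_upwards [ae_all_iff.2 fun n => h_near_min n z hz hz'] with ω hω using hω (τ k ω)

lemma finset_sum_add [FiniteDimensional ℝ E] [IsFiniteMeasure P] {ι : Type*} [LinearOrder ι]
    {ℱ : Filtration ι m} {C : ι → Set (Ω → E)} {K : Set (Ω → E)}
    (hC : ∀ t, IsClosedL0Cone (ℱ t) (ℱ t) P (C t)) (hK : IsClosedL0Cone m m P K)
    {s : Finset ι} (h_null : ∀ y : ι → Ω → E, (∀ t ∈ s, y t ∈ C t) → ∀ k ∈ K,
      ∑ t ∈ s, y t + k = 0 → (∀ t ∈ s, -y t ∈ C t) ∧ -k ∈ K)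
    (hG : G ≤ m) (hGs : ∀ t ∈ s, G ≤ ℱ t) :
    IsClosedL0Cone G m P (∑ t ∈ s, C t + K) := by
  induction s using Finset.induction_on_min generalizing G with
  | empty => simpa using hK.mono hG
  | insert a s has ih =>
    have ha : a ∉ s := fun h => lt_irrefl a (has a h)
    have h_split (y : ι → Ω → E) (z : Ω → E) : (∀ t ∈ s, Function.update y a z t = y t) ∧
        ∑ t ∈ insert a s, Function.update y a z t = z + ∑ t ∈ s, y t := by
      rw [Finset.sum_insert ha, Function.update_self, Finset.sum_update_of_notMem ha]
      exact ⟨fun t ht => Function.update_of_ne (ne_of_mem_of_not_mem ht ha) _ _, rfl⟩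
    have h_null_insert (y : ι → Ω → E) (z : Ω → E) (hz : z ∈ C a) (hy : ∀ t ∈ s, y t ∈ C t)
        (k : Ω → E) (hk : k ∈ K) (h_sum : z + (∑ t ∈ s, y t + k) = 0) :
        -z ∈ C a ∧ (∀ t ∈ s, -y t ∈ C t) ∧ -k ∈ K := by
      obtain ⟨h_eq, h_update⟩ := h_split y z
      obtain ⟨h_neg, hk_neg⟩ := h_null (Function.update y a z)
        ((Finset.forall_mem_insert _ _ _).2 ⟨by rwa [Function.update_self], fun t ht => by
          rw [h_eq t ht]; exact hy t ht⟩) k hk (by rw [h_update, add_assoc, h_sum])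
      refine ⟨by simpa using h_neg a (Finset.mem_insert_self a s), fun t ht => ?_, hk_neg⟩
      simpa only [h_eq t ht] using h_neg t (Finset.mem_insert_of_mem ht)
    have h_tail : IsClosedL0Cone (ℱ a) m P (∑ t ∈ s, C t + K) :=
      ih (fun y hy k hk h_sum => (h_null_insert y 0 (hC a).zero_mem hy k hk
        (by rw [zero_add, h_sum])).2) (ℱ.le a) fun t ht => ℱ.mono (has t ht).le
    rw [Finset.sum_insert ha, add_assoc]
    refine ((hC a).add (ℱ.le a) h_tail fun z hz hz' => ?_).mono (hGs a (Finset.mem_insert_self a s))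
    obtain ⟨w, hw, k, hk, h_eq : w + k = -z⟩ := hz'
    obtain ⟨y, hy, rfl⟩ := (mem_finsetSum _ _ _).1 hw
    obtain ⟨hz_neg, hy_neg, hk_neg⟩ := h_null_insert y z hz (fun t ht => hy ht) k hk
      (by rw [h_eq, add_neg_cancel])
    refine ⟨hz_neg, mem_add.2 ⟨-∑ t ∈ s, y t, ?_, -k, hk_neg, by rw [← neg_add, h_eq, neg_neg]⟩⟩
    rw [← Finset.sum_neg_distrib]
    exact (mem_finsetSum _ _ _).2 ⟨_, fun {t} ht => hy_neg t ht, rfl⟩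

end IsClosedL0Cone

lemma isClosedL0Cone_memL0 {d : ℕ} {m : MeasurableSpace Ω} {P : Measure Ω} (G : MeasurableSpace Ω)
    (K : Ω → ProperCone ℝ (Fin d → ℝ)) :
    IsClosedL0Cone G G P {x | MemL0 P G (fun ω => (K ω : Set (Fin d → ℝ))) x} where
  measurable hx := hx.1
  zero_mem := ⟨measurable_const, ae_of_all _ fun ω => (K ω).zero_mem⟩
  add_mem hx hy := ⟨hx.1.add hy.1, by
    filter_upwards [hx.2, hy.2] with ω hxω hyω using (K ω).add_mem hxω hyω⟩
  smul_mem hc hc0 hx := ⟨hc.smul hx.1, by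
    filter_upwards [hx.2] with ω hω using (K ω).smul_mem hω (hc0 ω)⟩
  mem_of_tendsto_ae hx hy hxy := ⟨hy, by
    filter_upwards [ae_all_iff.2 fun n => (hx n).2, hxy] with ω hω hωy
    exact (K ω).isClosed.mem_of_tendsto hωy (Eventually.of_forall hω)⟩

end ClosedCones

section KrepsYan

open Filter Topology
open scoped Matrix

lemma exists_mem_properCone_dominating {H : Type*} [NormedAddCommGroup H] [NormedSpace ℝ H]
    [CompleteSpace H] (D : ProperCone ℝ H) {Z : ℕ → H} (hZ : ∀ n, Z n ∈ D) :
    ∃ W ∈ D, ∀ n, ∃ c : ℝ, 0 < c ∧ W - c • Z n ∈ D := by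
  let c (n : ℕ) : ℝ := (1 / 2) ^ n * (1 + ‖Z n‖)⁻¹
  have hc (n : ℕ) : 0 < c n := by positivity
  have h_sum : Summable fun n => c n • Z n := by
    refine .of_norm_bounded (g := fun n => (1 / 2 : ℝ) ^ n) summable_geometric_two fun n => ?_
    rw [norm_smul, Real.norm_of_nonneg (hc n).le, mul_assoc]
    refine mul_le_of_le_one_right (by positivity) ?_
    rw [inv_mul_le_one₀ (by positivity)]
    exact (lt_one_add _).le
  have h_mem (s : Set ℕ) : ∑' n, s.indicator (fun n => c n • Z n) n ∈ D := by
    refine tsum_mem D.isClosed fun n => ?_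
    by_cases hn : n ∈ s
    · simpa only [indicator_of_mem hn] using D.smul_mem (hZ n) (hc n).le
    · simpa only [indicator_of_notMem hn] using zero_mem D
  refine ⟨∑' n, c n • Z n, by simpa using h_mem univ, fun n => ⟨c n, hc n, ?_⟩⟩
  rw [h_sum.tsum_eq_add_tsum_ite n, add_sub_cancel_left]
  convert h_mem {n}ᶜ using 3 with k
  by_cases hk : k = n <;> simp [hk]

variable {Ω E : Type*} {m : MeasurableSpace Ω} {P : Measure Ω}
  [NormedAddCommGroup E]

section Hilbert

variable [InnerProductSpace ℝ E] [IsFiniteMeasure P]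
  {𝒞 : ProperCone ℝ (Lp E 2 P)} {e : E}

lemma integrable_inner_of_L2 (e : E) (Z : Lp E 2 P) : Integrable (fun ω => inner ℝ e (Z ω)) P :=
  ((Lp.memLp Z).integrable one_le_two).const_inner e

variable [CompleteSpace E]

lemma ae_inner_nonneg_of_mem_innerDual
    (h_ind : ∀ B (hB : MeasurableSet B), indicatorConstLp 2 hB (measure_ne_top P B) e ∈ 𝒞)
    {Z : Lp E 2 P} (hZ : Z ∈ ProperCone.innerDual (𝒞 : Set (Lp E 2 P))) :
    ∀ᵐ ω ∂P, 0 ≤ inner ℝ e (Z ω) := by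
  refine ae_nonneg_of_forall_setIntegral_nonneg (integrable_inner_of_L2 e Z) fun B hB _ => ?_
  rw [← L2.inner_indicatorConstLp_eq_setIntegral_inner ℝ Z hB e (measure_ne_top P B)]
  exact ProperCone.mem_innerDual.1 hZ (h_ind B hB)

lemma exists_mem_innerDual_pos
    (h_ind : ∀ B (hB : MeasurableSet B), indicatorConstLp 2 hB (measure_ne_top P B) e ∈ 𝒞)
    (h_null : ∀ B (hB : MeasurableSet B),
      -indicatorConstLp 2 hB (measure_ne_top P B) e ∈ 𝒞 → P B = 0) :
    ∃ Z ∈ ProperCone.innerDual (𝒞 : Set (Lp E 2 P)), ∀ᵐ ω ∂P, 0 < inner ℝ e (Z ω) := by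
  let D := ProperCone.innerDual (𝒞 : Set (Lp E 2 P))
  let pos (Z : Lp E 2 P) : Set Ω := {ω | 0 < inner ℝ e (Z ω)}
  have h_pos (Z : Lp E 2 P) : MeasurableSet (pos Z) :=
    (stronglyMeasurable_const.measurableSet_lt
      (stronglyMeasurable_const.inner (Lp.stronglyMeasurable Z)))
  have : Nonempty D := ⟨0, D.zero_mem⟩
  obtain ⟨u, hu⟩ := exists_countable_ae_cover P (fun Z : D => pos Z) fun Z => h_pos Z
  obtain ⟨W, hW, h_dom⟩ := exists_mem_properCone_dominating D fun n => (u n).2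
  have h_cover (Z : Lp E 2 P) (hZ : Z ∈ D) : pos Z ≤ᵐ[P] pos W := by
    refine (hu ⟨Z, hZ⟩).trans ?_
    choose c hc hc_dom using h_dom
    filter_upwards [ae_all_iff.2 fun n => ae_inner_nonneg_of_mem_innerDual h_ind (hc_dom n),
      ae_all_iff.2 fun n => (Lp.coeFn_sub W (c n • (u n : Lp E 2 P))),
      ae_all_iff.2 fun n => (Lp.coeFn_smul (c n) (u n : Lp E 2 P))] with ω h_nonneg h_sub h_smul hω
    obtain ⟨n, hn⟩ := mem_iUnion.1 hω
    have h := h_nonneg n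
    rw [h_sub, Pi.sub_apply, h_smul, Pi.smul_apply, inner_sub_right, inner_smul_right] at h
    exact (mul_pos (hc n) hn).trans_le (sub_nonneg.1 h)
  refine ⟨W, hW, ?_⟩
  change P (pos W)ᶜ = 0
  refine h_null _ (h_pos W).compl (by_contra fun h_notMem => ?_)
  obtain ⟨Z, hZ, hZ_neg⟩ := ProperCone.hyperplane_separation' 𝒞 h_notMem
  rw [inner_neg_left, L2.inner_indicatorConstLp_eq_setIntegral_inner, neg_neg_iff_pos] at hZ_neg
  refine hZ_neg.not_ge (setIntegral_nonpos_of_ae_restrict ?_)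
  filter_upwards [ae_restrict_of_ae (h_cover Z hZ), ae_restrict_mem (h_pos W).compl] with ω h hω
  exact not_lt.1 fun hZω => hω (h hZω)

end Hilbert

variable {G : MeasurableSpace Ω} [MeasurableSpace E] [BorelSpace E] [SecondCountableTopology E]
  {A : Set (Ω → E)}

/-- The square integrable elements of a closed `L⁰` cone. -/
noncomputable def IsClosedL0Cone.toProperCone [NormedSpace ℝ E]
    (hA : IsClosedL0Cone G m P A) : ProperCone ℝ (Lp E 2 P) where
  carrier := {f | ⇑f ∈ A}
  zero_mem' := hA.congr_ae hA.zero_mem (Lp.stronglyMeasurable _).measurable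
    (Lp.coeFn_zero E 2 P).symm
  add_mem' {f g} hf hg := hA.congr_ae (hA.add_mem hf hg) (Lp.stronglyMeasurable _).measurable
    (Lp.coeFn_add f g).symm
  smul_mem' c f hf := hA.congr_ae (hA.smul_mem measurable_const (fun _ => c.2) hf)
    (Lp.stronglyMeasurable _).measurable (Lp.coeFn_smul (c : ℝ) f).symm
  isClosed' := IsSeqClosed.isClosed fun f g hf hfg => by
    obtain ⟨ns, -, hns⟩ := (tendstoInMeasure_of_tendsto_Lp hfg).exists_seq_tendsto_ae
    exact hA.mem_of_tendsto_ae (fun n => hf (ns n)) (Lp.stronglyMeasurable _).measurable hns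

variable [IsFiniteMeasure P]

lemma IsClosedL0Cone.exists_inner_pos [InnerProductSpace ℝ E] [CompleteSpace E]
    (hA : IsClosedL0Cone G m P A) {e : E}
    (h_ind : ∀ B, MeasurableSet[m] B → B.indicator (fun _ => e) ∈ A)
    (h_null : ∀ B, MeasurableSet[m] B → B.indicator (fun _ => -e) ∈ A → P B = 0) :
    ∃ Z : Ω → E, Integrable Z P ∧ (∀ᵐ ω ∂P, 0 < inner ℝ e (Z ω)) ∧
      ∀ x ∈ A, (∃ M : ℝ, ∀ ω, ‖x ω‖ ≤ M) → 0 ≤ ∫ ω, inner ℝ (x ω) (Z ω) ∂P := by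
  obtain ⟨Z, hZ, hZ_pos⟩ := exists_mem_innerDual_pos (𝒞 := hA.toProperCone) (e := e)
    (fun B hB => (hA.congr_ae (h_ind B hB)
      (Lp.stronglyMeasurable _).measurable indicatorConstLp_coeFn.symm))
    fun B hB h_mem => h_null B hB <| hA.congr_ae h_mem (measurable_const.indicator hB) <| by
      filter_upwards [Lp.coeFn_neg (indicatorConstLp 2 hB (measure_ne_top P B) e),
        indicatorConstLp_coeFn (p := 2) (hs := hB) (hμs := measure_ne_top P B) (c := e)]
        with ω h_neg h_coe
      rw [h_neg, Pi.neg_apply, h_coe]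
      exact (congrFun (indicator_neg B fun _ => e) ω).symm
  refine ⟨Z, (Lp.memLp Z).integrable one_le_two, hZ_pos, fun x hx ⟨M, hM⟩ => ?_⟩
  have hx_L2 : MemLp x 2 P :=
    .of_bound (hA.measurable hx).aestronglyMeasurable M (ae_of_all _ hM)
  have h_inner := ProperCone.mem_innerDual.1 hZ ((hA.congr_ae hx
    (Lp.stronglyMeasurable _).measurable hx_L2.coeFn_toLp.symm))
  rw [L2.inner_def] at h_inner
  refine h_inner.trans_eq (integral_congr_ae ?_)
  filter_upwards [hx_L2.coeFn_toLp] with ω hω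
  rw [hω]

lemma IsClosedL0Cone.exists_dotProduct_pos {ι : Type*} [Fintype ι] {A : Set (Ω → ι → ℝ)}
    (hA : IsClosedL0Cone G m P A) {e : ι → ℝ}
    (h_ind : ∀ B, MeasurableSet[m] B → B.indicator (fun _ => -e) ∈ A)
    (h_null : ∀ B, MeasurableSet[m] B → B.indicator (fun _ => e) ∈ A → P B = 0) :
    ∃ Z : Ω → ι → ℝ, Integrable Z P ∧ (∀ᵐ ω ∂P, 0 < e ⬝ᵥ Z ω) ∧
      ∀ x ∈ A, (∃ M : ℝ, ∀ ω, ‖x ω‖ ≤ M) → ∫ ω, x ω ⬝ᵥ Z ω ∂P ≤ 0 := by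
  let L : EuclideanSpace ℝ ι ≃L[ℝ] ι → ℝ :=
    (EuclideanSpace.equiv ι ℝ).trans (ContinuousLinearEquiv.neg ℝ)
  have h_inner (v : ι → ℝ) (z : EuclideanSpace ℝ ι) :
      inner ℝ (L.symm v) z = -(v ⬝ᵥ EuclideanSpace.equiv ι ℝ z) := by
    simp [L, PiLp.inner_apply, dotProduct, mul_comm]
  have h_indicator (B : Set Ω) (v : ι → ℝ) :
      L ∘ B.indicator (fun _ => L.symm v) = B.indicator fun _ => v := by
    rw [← indicator_comp_of_zero (map_zero L)]
    simp only [Function.comp_def, L.apply_symm_apply]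
  obtain ⟨Z, hZ, hZ_pos, hZ_le⟩ := (hA.comap L).exists_inner_pos (e := L.symm (-e))
    (fun B hB => by rw [mem_ofPred_eq, h_indicator]; exact h_ind B hB)
    fun B hB h_mem => h_null B hB (by
      rwa [mem_ofPred_eq, ← map_neg, h_indicator, neg_neg] at h_mem)
  refine ⟨fun ω => EuclideanSpace.equiv ι ℝ (Z ω),
    (EuclideanSpace.equiv ι ℝ).toContinuousLinearMap.integrable_comp hZ, ?_, fun x hx ⟨M, hM⟩ => ?_⟩
  · simpa only [h_inner, neg_dotProduct, neg_neg] using hZ_pos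
  · have h_nonneg := hZ_le (fun ω => L.symm (x ω))
      (by simpa only [mem_ofPred_eq, Function.comp_def, L.apply_symm_apply] using hx)
      ⟨‖L.symm.toContinuousLinearMap‖ * M, fun ω =>
        (L.symm.toContinuousLinearMap.le_opNorm_of_le (hM ω))⟩
    simpa only [h_inner, integral_neg, Left.nonneg_neg_iff] using h_nonneg

end KrepsYan

section Pairing

open Filter

variable {Ω E F : Type*} {G m : MeasurableSpace Ω} {μ : Measure Ω}
  [NormedAddCommGroup E] [NormedSpace ℝ E] [NormedAddCommGroup F] [NormedSpace ℝ F]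
  (B : E →L[ℝ] F →L[ℝ] ℝ) {H : Ω → E} {X : Ω → F}

lemma pairing_radialShrink (v : E) (w : F) : B (radialShrink v) w = (1 + ‖v‖)⁻¹ * B v w := by
  rw [radialShrink, map_smul, smul_apply, smul_eq_mul]

lemma pairing_radialShrink_nonneg_iff {v : E} {w : F} : 0 ≤ B (radialShrink v) w ↔ 0 ≤ B v w := by
  rw [pairing_radialShrink, mul_nonneg_iff_of_pos_left (by positivity)]

lemma pairing_radialShrink_eq_zero_iff {v : E} {w : F} : B (radialShrink v) w = 0 ↔ B v w = 0 := by
  rw [pairing_radialShrink, mul_eq_zero_iff_left (by positivity)]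

lemma integrable_pairing_radialShrink (hH : AEStronglyMeasurable H μ) (hX : Integrable X μ) :
    Integrable (fun ω => B (radialShrink (H ω)) (X ω)) μ :=
  B.integrable_of_bilin_of_bdd_left 1 (continuous_radialShrink.comp_aestronglyMeasurable hH)
    (ae_of_all _ fun _ => norm_radialShrink_le_one _) hX

lemma condExp_pairing_radialShrink [CompleteSpace F] (hG : G ≤ m)
    (hH : StronglyMeasurable[G] H) (hX : Integrable X μ) :
    μ[fun ω => B (radialShrink (H ω)) (X ω) | G] =ᵐ[μ]
      fun ω => B (radialShrink (H ω)) (μ[X | G] ω) :=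
  condExp_bilin_of_stronglyMeasurable_left B (continuous_radialShrink.comp_stronglyMeasurable hH)
    (integrable_pairing_radialShrink B (hH.mono hG).aestronglyMeasurable hX) hX

variable [IsFiniteMeasure μ]

lemma ae_condExp_nonneg_of_forall_setIntegral_nonneg (hG : G ≤ m) {f : Ω → ℝ}
    (hf : Integrable f μ) (h : ∀ D, MeasurableSet[G] D → 0 ≤ ∫ ω in D, f ω ∂μ) :
    0 ≤ᵐ[μ] μ[f | G] := by
  refine ae_le_of_ae_le_trim (ae_nonneg_of_forall_setIntegral_nonneg
    (integrable_condExp.trim hG stronglyMeasurable_condExp) fun D hD _ => ?_)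
  rw [← setIntegral_trim hG stronglyMeasurable_condExp hD, setIntegral_condExp hG hf hD]
  exact h D hD

variable [CompleteSpace F]

lemma ae_pairing_condExp_nonneg_of_forall_setIntegral_nonneg (hG : G ≤ m)
    (hH : StronglyMeasurable[G] H) (hX : Integrable X μ)
    (h : ∀ D, MeasurableSet[G] D → 0 ≤ ∫ ω in D, B (radialShrink (H ω)) (X ω) ∂μ) :
    ∀ᵐ ω ∂μ, 0 ≤ B (H ω) (μ[X | G] ω) := by
  filter_upwards [condExp_pairing_radialShrink B hG hH hX,
    ae_condExp_nonneg_of_forall_setIntegral_nonneg hG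
      (integrable_pairing_radialShrink B (hH.mono hG).aestronglyMeasurable hX) h]
    with ω h_eq h_nonneg
  exact (pairing_radialShrink_nonneg_iff B).1 (h_nonneg.trans_eq h_eq)

lemma ae_pairing_condExp_nonneg (hG : G ≤ m) (hH : StronglyMeasurable[G] H) (hX : Integrable X μ)
    (h : ∀ᵐ ω ∂μ, 0 ≤ B (H ω) (X ω)) : ∀ᵐ ω ∂μ, 0 ≤ B (H ω) (μ[X | G] ω) :=
  ae_pairing_condExp_nonneg_of_forall_setIntegral_nonneg B hG hH hX fun _ _ =>
    integral_nonneg_of_ae <| ae_restrict_of_ae <|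
      h.mono fun _ => (pairing_radialShrink_nonneg_iff B).2

lemma ae_pairing_eq_zero_of_condExp (hG : G ≤ m) (hH : StronglyMeasurable[G] H)
    (hX : Integrable X μ) (h : ∀ᵐ ω ∂μ, 0 ≤ B (H ω) (X ω))
    (h_zero : ∀ᵐ ω ∂μ, B (H ω) (μ[X | G] ω) = 0) : ∀ᵐ ω ∂μ, B (H ω) (X ω) = 0 := by
  have h_int : ∫ ω, B (radialShrink (H ω)) (X ω) ∂μ = 0 := by
    rw [← integral_condExp hG, integral_congr_ae (condExp_pairing_radialShrink B hG hH hX)]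
    exact integral_eq_zero_of_ae (h_zero.mono fun _ => (pairing_radialShrink_eq_zero_iff B).2)
  filter_upwards [(integral_eq_zero_iff_of_nonneg_ae
    (h.mono fun _ => (pairing_radialShrink_nonneg_iff B).2)
    (integrable_pairing_radialShrink B (hH.mono hG).aestronglyMeasurable hX)).1 h_int] with ω hω
  exact (pairing_radialShrink_eq_zero_iff B).1 hω

lemma ae_pairing_sum_eq_zero_of_martingale {ι : Type*} [LinearOrder ι] {ℱ : Filtration ι m}
    {X : ι → Ω → F} (hX : Martingale X ℱ μ) {x : ι → Ω → E}
    (hx_meas : ∀ t, StronglyMeasurable[ℱ t] (x t))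
    (hx : ∀ t, ∀ᵐ ω ∂μ, B (x t ω) (X t ω) ≤ 0) {s : Finset ι} {u : ι} (hsu : ∀ t ∈ s, t ≤ u)
    (h_nonneg : ∀ᵐ ω ∂μ, 0 ≤ B (∑ t ∈ s, x t ω) (X u ω)) :
    ∀ᵐ ω ∂μ, B (∑ t ∈ s, x t ω) (X u ω) = 0 := by
  induction s using Finset.induction_on_max generalizing u with
  | empty => simp
  | insert a s has ih =>
    have hau : a ≤ u := hsu a (Finset.mem_insert_self a s)
    have h_sum (ω : Ω) : ∑ t ∈ insert a s, x t ω = x a ω + ∑ t ∈ s, x t ω :=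
      Finset.sum_insert fun h => lt_irrefl a (has a h)
    have h_meas : StronglyMeasurable[ℱ a] fun ω => ∑ t ∈ insert a s, x t ω :=
      Finset.stronglyMeasurable_fun_sum _ fun t ht => (hx_meas t).mono <| ℱ.mono <|
        (Finset.mem_insert.1 ht).elim le_of_eq fun hts => (has t hts).le
    have h_condExp := hX.condExp_ae_eq hau
    have h_add : ∀ᵐ ω ∂μ, 0 ≤ B (x a ω) (X a ω) + B (∑ t ∈ s, x t ω) (X a ω) := by
      filter_upwards [h_condExp, ae_pairing_condExp_nonneg B (ℱ.le a) h_meas (hX.integrable u)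
        h_nonneg] with ω h_eq h
      rwa [h_eq, h_sum, map_add, add_apply] at h
    have h_tail : ∀ᵐ ω ∂μ, B (∑ t ∈ s, x t ω) (X a ω) = 0 := by
      refine ih (fun t ht => (has t ht).le) ?_
      filter_upwards [h_add, hx a] with ω h1 h2 using by linarith
    refine ae_pairing_eq_zero_of_condExp B (ℱ.le a) h_meas (hX.integrable u) h_nonneg ?_
    filter_upwards [h_condExp, h_add, hx a, h_tail] with ω h_eq h1 h2 h3
    rw [h_eq, h_sum, map_add, add_apply]
    linarith

end Pairing

section MartingaleMeasure

variable {Ω E F κ : Type*} {G m : MeasurableSpace Ω} {P : Measure Ω}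
  [NormedAddCommGroup E] [NormedSpace ℝ E] [NormedAddCommGroup F] [NormedSpace ℝ F]
  (B : E →L[ℝ] F →L[ℝ] ℝ)

/- The martingale is the conditional expectation of the dual density `Z` taken in the numéraire
`e`, under the measure of density proportional to `B e Z`. -/
lemma exists_martingale_pairing_nonneg [NeZero P] [SFinite P] [CompleteSpace F] [Preorder κ]
    (ℱ : Filtration κ m) {Z : Ω → F} (hZ : Integrable Z P) {e : E} (he : ∀ᵐ ω ∂P, 0 < B e (Z ω)) :
    ∃ Q : Measure Ω, IsProbabilityMeasure Q ∧ Q ≪ P ∧ P ≪ Q ∧ ∃ X : κ → Ω → F, Martingale X ℱ Q ∧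
      (∀ t, ∀ᵐ ω ∂P, B e (X t ω) = 1) ∧
      ∀ t (H : Ω → E), StronglyMeasurable[ℱ t] H →
        (∀ D, MeasurableSet[ℱ t] D → 0 ≤ ∫ ω in D, B (radialShrink (H ω)) (Z ω) ∂P) →
        ∀ᵐ ω ∂P, 0 ≤ B (H ω) (X t ω) := by
  let f (ω : Ω) : ℝ := Real.log (B e (Z ω))
  have h_exp : ∀ᵐ ω ∂P, Real.exp (f ω) = B e (Z ω) := he.mono fun ω => Real.exp_log
  have h_exp_int : Integrable (fun ω => Real.exp (f ω)) P :=
    ((B e).integrable_comp hZ).congr (h_exp.mono fun _ => Eq.symm)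
  have hPQ : P ≪ P.tilted f := absolutelyContinuous_tilted h_exp_int
  have := isProbabilityMeasure_tilted h_exp_int
  let Y (ω : Ω) : F := (B e (Z ω))⁻¹ • Z ω
  have h_smul : ∀ᵐ ω ∂P, Real.exp (f ω) • Y ω = Z ω := by
    filter_upwards [h_exp, he] with ω h_eq h_pos
    rw [h_eq, smul_inv_smul₀ h_pos.ne']
  have hY : Integrable Y (P.tilted f) := (integrable_tilted_iff h_exp_int Y).2
    (hZ.congr (h_smul.mono fun _ => Eq.symm))
  have h_tilted (H : Ω → E) (D : Set Ω) :
      ∫ ω in D, B (radialShrink (H ω)) (Y ω) ∂P.tilted f =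
        (∫ ω, Real.exp (f ω) ∂P)⁻¹ * ∫ ω in D, B (radialShrink (H ω)) (Z ω) ∂P := by
    rw [setIntegral_tilted, ← integral_const_mul]
    refine integral_congr_ae (ae_restrict_of_ae (h_smul.mono fun ω hω => ?_))
    dsimp only
    rw [← hω, map_smul (B _) (Real.exp (f ω)) (Y ω), smul_eq_mul, smul_eq_mul, div_eq_inv_mul,
      mul_assoc]
  refine ⟨P.tilted f, this, tilted_absolutelyContinuous P f, hPQ, _, martingale_condExp Y ℱ _,
    fun t => hPQ.ae_le ?_, fun t H hH h => hPQ.ae_le ?_⟩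
  · have h_one : (fun ω => B e (Y ω)) =ᵐ[P.tilted f] fun _ => 1 := by
      filter_upwards [(tilted_absolutelyContinuous P f).ae_le he] with ω h_pos
      rw [map_smul, smul_eq_mul, inv_mul_cancel₀ h_pos.ne']
    filter_upwards [(B e).comp_condExp_comm hY (m := ℱ t), condExp_congr_ae (m := ℱ t) h_one]
      with ω h_comm h_congr
    rw [← Function.comp_apply (f := B e), h_comm]
    exact h_congr.trans (congrFun (condExp_const (ℱ.le t) 1) ω)
  · refine ae_pairing_condExp_nonneg_of_forall_setIntegral_nonneg B (ℱ.le t) hH hY fun D hD => ?_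
    rw [h_tilted]
    exact mul_nonneg (inv_nonneg.2 (integral_exp_pos h_exp_int).le) (h D hD)

lemma martingale_continuousLinearMap_comp [CompleteSpace E] [CompleteSpace F] [Preorder κ]
    {ℱ : Filtration κ m} {X : κ → Ω → E} (hX : Martingale X ℱ P) (L : E →L[ℝ] F) :
    Martingale (fun t ω => L (X t ω)) ℱ P := by
  refine ⟨fun t => L.continuous.comp_stronglyMeasurable (hX.stronglyMeasurable t),
    fun s t hst => ?_⟩
  refine (L.comp_condExp_comm (hX.integrable t)).symm.trans ?_
  filter_upwards [hX.condExp_ae_eq hst] with ω hω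
  rw [Function.comp_apply, hω]

/-- The dot product as a continuous bilinear form. -/
noncomputable def dotProductCLM (ι : Type*) [Fintype ι] : (ι → ℝ) →L[ℝ] (ι → ℝ) →L[ℝ] ℝ :=
  (dotProductBilin ℝ ℝ).toContinuousBilinearMap

@[simp]
lemma dotProductCLM_apply {ι : Type*} [Fintype ι] (v w : ι → ℝ) :
    dotProductCLM ι v w = v ⬝ᵥ w :=
  LinearMap.toContinuousBilinearMap_apply _ _ _

theorem IsClosedL0Cone.exists_martingale_dotProduct_nonpos [NeZero P] [IsFiniteMeasure P]
    {ι : Type*} [Fintype ι] [Preorder κ] {ℱ : Filtration κ m} {A : Set (Ω → ι → ℝ)}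
    (hA : IsClosedL0Cone G m P A) {C : κ → Set (Ω → ι → ℝ)}
    (hC : ∀ t, IsClosedL0Cone (ℱ t) (ℱ t) P (C t)) (hCA : ∀ t, C t ⊆ A) {e : ι → ℝ}
    (h_ind : ∀ D, MeasurableSet[m] D → D.indicator (fun _ => -e) ∈ A)
    (h_null : ∀ D, MeasurableSet[m] D → D.indicator (fun _ => e) ∈ A → P D = 0) :
    ∃ Q : Measure Ω, IsProbabilityMeasure Q ∧ Q ≪ P ∧ P ≪ Q ∧
      ∃ X : κ → Ω → ι → ℝ, Martingale X ℱ Q ∧ (∀ t, ∀ᵐ ω ∂P, e ⬝ᵥ X t ω = 1) ∧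
        ∀ t, ∀ x ∈ C t, ∀ᵐ ω ∂P, x ω ⬝ᵥ X t ω ≤ 0 := by
  obtain ⟨Z, hZ, heZ, hAZ⟩ := hA.exists_dotProduct_pos h_ind h_null
  obtain ⟨Q, hQ, hQP, hPQ, X, hX, heX, hCX⟩ :=
    exists_martingale_pairing_nonneg (dotProductCLM ι) ℱ hZ (e := e) (by simpa using heZ)
  refine ⟨Q, hQ, hQP, hPQ, X, hX, by simpa using heX, fun t x hx => ?_⟩
  have hx_meas := (hC t).measurable hx
  have h_shrink : (fun ω => radialShrink (x ω)) ∈ C t :=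
    have h_meas : Measurable fun v : ι → ℝ => (1 + ‖v‖)⁻¹ := by fun_prop
    (hC t).smul_mem (h_meas.comp hx_meas) (fun ω => inv_nonneg.2 (by positivity)) hx
  have h_int (D : Set Ω) (hD : MeasurableSet[ℱ t] D) :
      0 ≤ ∫ ω in D, dotProductCLM ι (radialShrink (-x ω)) (Z ω) ∂P := by
    have h_le := hAZ _ (hCA t ((hC t).indicator_mem hD h_shrink))
      ⟨1, fun ω => (norm_indicator_le_norm_self _ ω).trans (norm_radialShrink_le_one _)⟩
    have h_eq (ω : Ω) : D.indicator (fun ω => radialShrink (x ω)) ω ⬝ᵥ Z ω =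
        D.indicator (fun ω => -dotProductCLM ι (radialShrink (-x ω)) (Z ω)) ω := by
      by_cases hω : ω ∈ D <;> simp [hω, radialShrink]
    simp_rw [h_eq] at h_le
    rwa [integral_indicator (ℱ.le t D hD), integral_neg, neg_nonpos] at h_le
  filter_upwards [hCX t (-x) hx_meas.neg.stronglyMeasurable h_int] with ω hω
  simpa using hω

end MartingaleMeasure

section Intervals

lemma mem_intrinsicInterior_Icc {b a x : ℝ} :
    x ∈ intrinsicInterior ℝ (Icc b a) ↔ (b < x ∧ x < a) ∨ (b = x ∧ x = a) := by
  rcases lt_trichotomy b a with h | rfl | h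
  · have h_span : affineSpan ℝ (Icc b a) = ⊤ := by
      refine affineSpan_eq_top_of_nonempty_interior ?_
      rw [(convex_Icc b a).convexHull_eq, interior_Icc]
      exact nonempty_Ioo.2 h
    have h_open : IsOpen (affineSpan ℝ (Icc b a) : Set ℝ) := by simp [h_span]
    have h_eq : intrinsicInterior ℝ (Icc b a) = Ioo b a := by
      rw [← interior_Icc]
      exact (interior_maximal intrinsicInterior_subset
        (h_open.isOpenMap_subtype_val _ isOpen_interior)).antisymm interior_subset_intrinsicInterior
    rw [h_eq, mem_Ioo]
    exact ⟨Or.inl, fun hx => hx.resolve_right fun hx => h.ne (hx.1.trans hx.2)⟩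
  · rw [Icc_self, intrinsicInterior_singleton, mem_singleton_iff]
    exact ⟨fun hx => Or.inr ⟨hx.symm, hx⟩, fun hx =>
      hx.elim (fun hx => absurd (hx.1.trans hx.2) (lt_irrefl b)) And.right⟩
  · rw [Icc_eq_empty h.not_ge, intrinsicInterior_empty]
    refine ⟨False.elim, fun hx => h.not_ge ?_⟩
    exact hx.elim (fun hx => (hx.1.trans hx.2).le) fun hx => (hx.1.trans hx.2).le

lemma Icc_subset_intrinsicInterior_Icc {b a b' a' : ℝ} (h : b' ≤ a') :
    Icc b' a' ⊆ intrinsicInterior ℝ (Icc b a) ↔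
      (b < b' ∧ a' < a) ∨ (b = b' ∧ b' = a' ∧ a' = a) := by
  refine ⟨fun h_sub => ?_, fun h_or x hx => mem_intrinsicInterior_Icc.2 ?_⟩
  · have hb' := mem_intrinsicInterior_Icc.1 (h_sub (left_mem_Icc.2 h))
    have ha' := mem_intrinsicInterior_Icc.1 (h_sub (right_mem_Icc.2 h))
    grind
  · grind

lemma Icc_midpoints_subset_intrinsicInterior_Icc {b a b' a' : ℝ} (h : b' ≤ a')
    (h_sub : Icc b' a' ⊆ intrinsicInterior ℝ (Icc b a)) :
    Icc ((b + b') / 2) ((a + a') / 2) ⊆ intrinsicInterior ℝ (Icc b a) ∧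
      Icc b' a' ⊆ intrinsicInterior ℝ (Icc ((b + b') / 2) ((a + a') / 2)) := by
  rw [Icc_subset_intrinsicInterior_Icc h] at h_sub ⊢
  rw [Icc_subset_intrinsicInterior_Icc (by grind)]
  grind

lemma div_mem_intrinsicInterior_Icc {b₁ a₁ s₁ b₂ a₂ s₂ : ℝ} (hb₁ : 0 < b₁) (hb₂ : 0 < b₂)
    (hs₁ : s₁ ∈ intrinsicInterior ℝ (Icc b₁ a₁)) (hs₂ : s₂ ∈ intrinsicInterior ℝ (Icc b₂ a₂)) :
    s₂ / s₁ ∈ intrinsicInterior ℝ (Icc (b₂ / a₁) (a₂ / b₁)) := by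
  rw [mem_intrinsicInterior_Icc] at *
  rcases hs₁ with ⟨hbs₁, hsa₁⟩ | ⟨rfl, rfl⟩
  · have hs₁ : 0 < s₁ := hb₁.trans hbs₁
    have h_le : b₂ ≤ s₂ ∧ s₂ ≤ a₂ := by grind
    exact Or.inl ⟨div_lt_div₀' h_le.1 hsa₁ (hb₂.trans_le h_le.1) hs₁,
      div_lt_div₀' h_le.2 hbs₁ (by linarith) hb₁⟩
  · rcases hs₂ with ⟨hbs₂, hsa₂⟩ | ⟨rfl, rfl⟩
    · exact Or.inl ⟨div_lt_div_of_pos_right hbs₂ hb₁, div_lt_div_of_pos_right hsa₂ hb₁⟩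
    · exact Or.inr ⟨rfl, rfl⟩

end Intervals

section AcquisitionCost

variable {d : ℕ} {b a b' a' : Fin d → ℝ}

/-- The amount of cash (asset `0`) needed to set up the portfolio `x` when asset `i.succ` is
bought at the price `a i` and sold at the price `b i`. When `b ≤ a`, the maximum selects the price
at which the position `x i.succ` is traded. -/
def acquisitionCost (b a : Fin d → ℝ) (x : Fin (d + 1) → ℝ) : ℝ :=
  x 0 + ∑ i, max (a i * x i.succ) (b i * x i.succ)

@[fun_prop]
lemma continuous_acquisitionCost (b a : Fin d → ℝ) : Continuous (acquisitionCost b a) := by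
  unfold acquisitionCost
  fun_prop

lemma acquisitionCost_add_le (x y : Fin (d + 1) → ℝ) :
    acquisitionCost b a (x + y) ≤ acquisitionCost b a x + acquisitionCost b a y := by
  have h_sum := Finset.sum_le_sum fun i (_ : i ∈ Finset.univ) => max_add_add_le_max_add_max
    (a := a i * x i.succ) (b := a i * y i.succ) (c := b i * x i.succ) (d := b i * y i.succ)
  rw [Finset.sum_add_distrib] at h_sum
  simp only [acquisitionCost, Pi.add_apply, mul_add]
  linarith

lemma acquisitionCost_smul {c : ℝ} (hc : 0 ≤ c) (x : Fin (d + 1) → ℝ) :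
    acquisitionCost b a (c • x) = c * acquisitionCost b a x := by
  simp only [acquisitionCost, Pi.smul_apply, smul_eq_mul, mul_add, Finset.mul_sum,
    mul_max_of_nonneg _ _ hc, mul_left_comm c]

lemma acquisitionCost_add_single_zero (x : Fin (d + 1) → ℝ) (c : ℝ) :
    acquisitionCost b a (x + Pi.single 0 c) = acquisitionCost b a x + c := by
  simp only [acquisitionCost, Pi.add_apply, Pi.single_eq_same,
    Pi.single_eq_of_ne (Fin.succ_ne_zero _), add_zero]
  ring

lemma acquisitionCost_single_succ (i : Fin d) (c : ℝ) :
    acquisitionCost b a (Pi.single i.succ c) = max (a i * c) (b i * c) := by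
  rw [acquisitionCost, Pi.single_eq_of_ne (Fin.succ_ne_zero i).symm, zero_add,
    Finset.sum_eq_single i (fun j _ hj => ?_) (fun hi => absurd (Finset.mem_univ i) hi),
    Pi.single_eq_same]
  rw [Pi.single_eq_of_ne ((Fin.succ_injective d).ne hj), mul_zero, mul_zero, max_self]

lemma measurable_acquisitionCost {Ω : Type*} {_ : MeasurableSpace Ω} {b a : Ω → Fin d → ℝ}
    {x : Ω → Fin (d + 1) → ℝ} (hb : Measurable b) (ha : Measurable a) (hx : Measurable x) :
    Measurable fun ω => acquisitionCost (b ω) (a ω) (x ω) := by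
  unfold acquisitionCost
  fun_prop

lemma max_mul_le_max_mul {b a b' a' : ℝ} (hba : b' ≤ a')
    (h : Icc b' a' ⊆ Icc b a) (x : ℝ) :
    max (a' * x) (b' * x) ≤ max (a * x) (b * x) := by
  obtain ⟨hb, ha⟩ : b ≤ b' ∧ a' ≤ a := (Icc_subset_Icc_iff hba).1 h
  rcases le_total 0 x with hx | hx
  · exact le_max_of_le_left (max_le (by gcongr) (by gcongr; exact hba.trans ha))
  · exact le_max_of_le_right (max_le (mul_le_mul_of_nonpos_right (hb.trans hba) hx)
      (mul_le_mul_of_nonpos_right hb hx))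

lemma max_mul_neg_of_max_mul_eq {b a b' a' x : ℝ} (hba : b' ≤ a')
    (h : Icc b' a' ⊆ intrinsicInterior ℝ (Icc b a))
    (h_eq : max (a' * x) (b' * x) = max (a * x) (b * x)) :
    max (a * -x) (b * -x) = -max (a * x) (b * x) := by
  rcases (Icc_subset_intrinsicInterior_Icc hba).1 h with ⟨hb, ha⟩ | ⟨rfl, rfl, rfl⟩
  · rcases lt_trichotomy x 0 with hx | rfl | hx
    · refine absurd h_eq (ne_of_lt (lt_max_of_lt_right (max_lt ?_ ?_)))
      · exact mul_lt_mul_of_neg_right (hb.trans_le hba) hx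
      · exact mul_lt_mul_of_neg_right hb hx
    · simp
    · refine absurd h_eq (ne_of_lt (lt_max_of_lt_left (max_lt ?_ ?_)))
      · exact mul_lt_mul_of_pos_right ha hx
      · exact mul_lt_mul_of_pos_right (hba.trans_lt ha) hx
  · simp

lemma acquisitionCost_le (hba : b' ≤ a')
    (h : ∀ i, Icc (b' i) (a' i) ⊆ Icc (b i) (a i)) (x : Fin (d + 1) → ℝ) :
    acquisitionCost b' a' x ≤ acquisitionCost b a x :=
  add_le_add_right
    (Finset.sum_le_sum fun i _ => max_mul_le_max_mul (hba i) (h i) (x i.succ)) (x 0)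

lemma acquisitionCost_neg_nonpos (hba : b' ≤ a')
    (h : ∀ i, Icc (b' i) (a' i) ⊆ intrinsicInterior ℝ (Icc (b i) (a i))) {x : Fin (d + 1) → ℝ}
    (hx : acquisitionCost b a x ≤ 0) (hx' : acquisitionCost b' a' x = 0) :
    acquisitionCost b a (-x) ≤ 0 := by
  have h_sub (i : Fin d) : Icc (b' i) (a' i) ⊆ Icc (b i) (a i) :=
    (h i).trans intrinsicInterior_subset
  have h_eq : acquisitionCost b' a' x = acquisitionCost b a x :=
    (acquisitionCost_le hba h_sub x).antisymm (hx.trans_eq hx'.symm)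
  have h_max (i : Fin d) : max (a i * -x i.succ) (b i * -x i.succ) =
      -max (a i * x i.succ) (b i * x i.succ) :=
    max_mul_neg_of_max_mul_eq (hba i) (h i) <|
      (Finset.sum_eq_sum_iff_of_le fun i _ => max_mul_le_max_mul (hba i) (h_sub i) (x i.succ)).1
        (add_left_cancel h_eq) i (Finset.mem_univ i)
  have h_neg : acquisitionCost b a (-x) = -acquisitionCost b a x := by
    simp only [acquisitionCost, Pi.neg_apply, h_max, Finset.sum_neg_distrib, neg_add]
  rw [h_neg, ← h_eq, hx', neg_zero]

/-- The closed cone of the portfolios that can be set up from nothing, throwing away money if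
necessary, when the assets `i.succ` are sold at the prices `b i` and bought at the prices `a i`. -/
def tradeCone (b a : Fin d → ℝ) : ProperCone ℝ (Fin (d + 1) → ℝ) where
  carrier := {x | acquisitionCost b a x ≤ 0}
  zero_mem' := by simp [acquisitionCost]
  add_mem' hx hy := (acquisitionCost_add_le _ _).trans (add_nonpos hx hy)
  smul_mem' c x hx := (acquisitionCost_smul c.2 x).trans_le (mul_nonpos_of_nonneg_of_nonpos c.2 hx)
  isClosed' := isClosed_le (continuous_acquisitionCost b a) continuous_const

lemma mem_tradeCone {x : Fin (d + 1) → ℝ} : x ∈ tradeCone b a ↔ acquisitionCost b a x ≤ 0 :=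
  Iff.rfl

lemma buy_mem_tradeCone {i : Fin d} (h : b i ≤ a i) :
    Pi.single i.succ 1 - Pi.single 0 (a i) ∈ tradeCone b a := by
  rw [sub_eq_add_neg, ← Pi.single_neg, mem_tradeCone, acquisitionCost_add_single_zero,
    acquisitionCost_single_succ, mul_one, mul_one, max_eq_left h, add_neg_cancel]

lemma sell_mem_tradeCone {i : Fin d} (h : b i ≤ a i) :
    Pi.single 0 (b i) - Pi.single i.succ 1 ∈ tradeCone b a := by
  rw [sub_eq_neg_add, ← Pi.single_neg, mem_tradeCone, acquisitionCost_add_single_zero,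
    acquisitionCost_single_succ, mul_neg_one, mul_neg_one, max_eq_right (neg_le_neg h),
    neg_add_cancel]

end AcquisitionCost

section SolvencyCone

variable {d : ℕ}

lemma subset_generatedClosedCone (S : Set (Fin d → ℝ)) : S ⊆ generatedClosedCone S :=
  subset_sInter fun _ hC => hC.1

lemma smul_mem_generatedClosedCone {S : Set (Fin d → ℝ)} {x : Fin d → ℝ} {c : ℝ} (hc : 0 ≤ c)
    (hx : x ∈ generatedClosedCone S) : c • x ∈ generatedClosedCone S :=
  fun C hC => hC.2.2.2 x (hx C hC) c hc

lemma add_mem_generatedClosedCone {S : Set (Fin d → ℝ)} {x y : Fin d → ℝ}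
    (hx : x ∈ generatedClosedCone S) (hy : y ∈ generatedClosedCone S) :
    x + y ∈ generatedClosedCone S := by
  intro C hC
  have h_mid : (1 / 2 : ℝ) • x + (1 / 2 : ℝ) • y ∈ C :=
    hC.2.2.1 (hx C hC) (hy C hC) one_half_pos.le one_half_pos.le (add_halves 1)
  have h_eq : x + y = (2 : ℝ) • ((1 / 2 : ℝ) • x + (1 / 2 : ℝ) • y) := by module
  exact h_eq ▸ hC.2.2.2 _ h_mid 2 zero_le_two

lemma single_mem_solvencyCone (M : Matrix (Fin d) (Fin d) ℝ) {c : ℝ} (hc : 0 ≤ c) (i : Fin d) :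
    Pi.single i c ∈ solvencyCone M := by
  have h : c • (Pi.single i 1 : Fin d → ℝ) ∈ solvencyCone M :=
    smul_mem_generatedClosedCone hc (subset_generatedClosedCone _ (Or.inl ⟨i, rfl⟩))
  rwa [← Pi.single_smul, smul_eq_mul, mul_one] at h

lemma single_sub_single_mem_solvencyCone (M : Matrix (Fin d) (Fin d) ℝ) {c : ℝ} (hc : 0 ≤ c)
    (i j : Fin d) : Pi.single i (c * M i j) - Pi.single j c ∈ solvencyCone M := by
  have h : c • (M i j • (Pi.single i 1 : Fin d → ℝ) - Pi.single j 1) ∈ solvencyCone M :=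
    smul_mem_generatedClosedCone hc (subset_generatedClosedCone _ (Or.inr ⟨i, j, rfl⟩))
  simpa only [smul_sub, ← Pi.single_smul, smul_eq_mul, mul_one] using h

lemma IsBidAskMatrix.one_div_le {M : Matrix (Fin d) (Fin d) ℝ} (hM : IsBidAskMatrix M)
    (i j : Fin d) : 1 / M j i ≤ M i j := by
  rw [div_le_iff₀ (hM.1 j i), ← hM.2.1 i]
  exact hM.2.2 i i j

lemma IsBidAskMatrix.single_max_sub_single_mem_solvencyCone {M : Matrix (Fin d) (Fin d) ℝ}
    (hM : IsBidAskMatrix M) (i j : Fin d) (c : ℝ) :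
    Pi.single i (max (M i j * c) (1 / M j i * c)) - Pi.single j c ∈ solvencyCone M := by
  rcases le_total 0 c with hc | hc
  · rw [max_eq_left (by gcongr; exact hM.one_div_le i j), mul_comm]
    exact single_sub_single_mem_solvencyCone M hc i j
  · have h_pos := hM.1 j i
    have h := single_sub_single_mem_solvencyCone M (div_nonneg (neg_nonneg.2 hc) h_pos.le) j i
    rwa [div_mul_cancel₀ _ h_pos.ne', neg_div, Pi.single_neg, Pi.single_neg, neg_sub_neg,
      ← one_div_mul_eq_div,
      ← max_eq_right (mul_le_mul_of_nonpos_right (hM.one_div_le i j) hc)] at h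

lemma IsBidAskMatrix.neg_mem_solvencyCone {M : Matrix (Fin (d + 1)) (Fin (d + 1)) ℝ}
    (hM : IsBidAskMatrix M) {x : Fin (d + 1) → ℝ}
    (hx : x ∈ tradeCone (fun i => 1 / M i.succ 0) fun i => M 0 i.succ) : -x ∈ solvencyCone M := by
  have h_eq : -x =
      Pi.single 0 (-acquisitionCost (fun i => 1 / M i.succ 0) (fun i => M 0 i.succ) x) +
      ∑ i : Fin d, (Pi.single 0 (max (M 0 i.succ * x i.succ) (1 / M i.succ 0 * x i.succ)) -
        Pi.single i.succ (x i.succ)) := by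
    ext j
    cases j using Fin.cases <;> simp [acquisitionCost, Finset.sum_apply, Pi.single_apply]
  rw [h_eq]
  refine add_mem_generatedClosedCone (single_mem_solvencyCone M (neg_nonneg.2 hx) 0) ?_
  refine Finset.sum_induction _ (· ∈ solvencyCone M) (fun _ _ => add_mem_generatedClosedCone)
    ?_ fun i _ => hM.single_max_sub_single_mem_solvencyCone 0 i.succ (x i.succ)
  simpa using single_mem_solvencyCone M le_rfl 0

open scoped Matrix in
lemma dotProduct_nonneg_of_mem_solvencyCone {M : Matrix (Fin d) (Fin d) ℝ} {s v : Fin d → ℝ}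
    (hs : 0 ≤ s) (hM : ∀ i j, s j ≤ M i j * s i) (hv : v ∈ solvencyCone M) : 0 ≤ v ⬝ᵥ s := by
  refine hv {v | 0 ≤ v ⬝ᵥ s} ⟨?_, ?_, ?_, ?_⟩
  · rintro _ (⟨i, rfl⟩ | ⟨i, j, rfl⟩)
    · simpa using hs i
    · simpa [sub_dotProduct] using hM i j
  · exact isClosed_le continuous_const (by fun_prop)
  · intro x hx y hy a b ha hb _
    rw [mem_ofPred_eq, add_dotProduct, smul_dotProduct, smul_dotProduct]
    exact add_nonneg (mul_nonneg ha hx) (mul_nonneg hb hy)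
  · intro x hx c hc
    rw [mem_ofPred_eq, smul_dotProduct]
    exact mul_nonneg hc hx

end SolvencyCone

section BidAskMarket

open scoped Pointwise Matrix

variable {Ω κ : Type*} {d : ℕ} {m : MeasurableSpace Ω}

/-- The cone of the portfolios that are nonpositive in every asset. -/
def nonposCone (d : ℕ) : ProperCone ℝ (Fin d → ℝ) :=
  (ProperCone.positive ℝ (Fin d → ℝ)).comap (-ContinuousLinearMap.id ℝ (Fin d → ℝ))

@[simp]
lemma mem_nonposCone {x : Fin d → ℝ} : x ∈ nonposCone d ↔ x ≤ 0 := by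
  simp [nonposCone]

/-- Trading in the assets `i.succ` at the bid prices `b t · i` and ask prices `a t · i` against
cash, with `ℱ t`-measurable trades at each time `t`, yields no nonzero nonnegative portfolio. -/
def IsArbitrageFree [Preorder κ] [Fintype κ] (P : Measure Ω) (ℱ : Filtration κ m)
    (b a : κ → Ω → Fin d → ℝ) : Prop :=
  ∀ z : κ → Ω → Fin (d + 1) → ℝ,
    (∀ t, MemL0 P (ℱ t) (fun ω => (tradeCone (b t ω) (a t ω) : Set (Fin (d + 1) → ℝ))) (z t)) →
    (∀ᵐ ω ∂P, 0 ≤ ∑ t, z t ω) → ∀ᵐ ω ∂P, ∑ t, z t ω = 0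

variable [Fintype κ] {P : Measure Ω} {b a b' a' : κ → Ω → Fin d → ℝ}

/-
The cost of `y t` at the tighter prices `b'`, `a'` is nonpositive; refunding it in cash turns `y`
into a strategy for these prices, so all refunds vanish. A trade that costs nothing at both price
levels only involves assets without bid-ask spread and can be undone.
-/
lemma IsArbitrageFree.neg_mem_tradeCone [Preorder κ] {ℱ : Filtration κ m}
    (h_free : IsArbitrageFree P ℱ b' a') (hb' : ∀ t, Measurable[ℱ t] (b' t))
    (ha' : ∀ t, Measurable[ℱ t] (a' t)) (hba' : b' ≤ a')
    (h_sub : ∀ t, ∀ᵐ ω ∂P, ∀ i,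
      Icc (b' t ω i) (a' t ω i) ⊆ intrinsicInterior ℝ (Icc (b t ω i) (a t ω i)))
    {y : κ → Ω → Fin (d + 1) → ℝ} (hy_meas : ∀ t, Measurable[ℱ t] (y t))
    (hy : ∀ t, ∀ᵐ ω ∂P, y t ω ∈ tradeCone (b t ω) (a t ω))
    {k : Ω → Fin (d + 1) → ℝ} (hk : ∀ᵐ ω ∂P, k ω ≤ 0) (h_sum : ∀ ω, ∑ t, y t ω + k ω = 0) :
    (∀ t, ∀ᵐ ω ∂P, -y t ω ∈ tradeCone (b t ω) (a t ω)) ∧ ∀ᵐ ω ∂P, k ω = 0 := by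
  let c (t : κ) (ω : Ω) : ℝ := acquisitionCost (b' t ω) (a' t ω) (y t ω)
  have hc : ∀ᵐ ω ∂P, ∀ t, c t ω ≤ 0 := ae_all_iff.2 fun t => by
    filter_upwards [hy t, h_sub t] with ω hyω h
    exact (acquisitionCost_le (hba' t ω)
      (fun i => (h i).trans intrinsicInterior_subset) _).trans hyω
  let z (t : κ) (ω : Ω) : Fin (d + 1) → ℝ := y t ω + Pi.single 0 (-c t ω)
  have hz (t : κ) : MemL0 P (ℱ t)
      (fun ω => (tradeCone (b' t ω) (a' t ω) : Set (Fin (d + 1) → ℝ))) (z t) := by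
    refine ⟨(hy_meas t).add ((measurable_update (0 : Fin (d + 1) → ℝ)).comp
      (measurable_acquisitionCost (hb' t) (ha' t) (hy_meas t)).neg), ae_of_all _ fun ω => ?_⟩
    exact ((acquisitionCost_add_single_zero _ _).trans (add_neg_cancel (c t ω))).le
  have hz_sum (ω : Ω) : ∑ t, z t ω = -k ω + Pi.single 0 (-∑ t, c t ω) := by
    rw [Finset.sum_add_distrib, eq_neg_of_add_eq_zero_left (h_sum ω), ← Finset.sum_neg_distrib]
    exact congrArg (-k ω + ·)
      (map_sum (AddMonoidHom.single (fun _ : Fin (d + 1) => ℝ) 0) _ _).symm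
  have h_nonneg : ∀ᵐ ω ∂P, 0 ≤ -k ω ∧ (0 : Fin (d + 1) → ℝ) ≤ Pi.single 0 (-∑ t, c t ω) := by
    filter_upwards [hk, hc] with ω hkω hcω
    exact ⟨neg_nonneg.2 hkω,
      Pi.single_nonneg.2 (neg_nonneg.2 (Finset.sum_nonpos fun t _ => hcω t))⟩
  have h_zero : ∀ᵐ ω ∂P, k ω = 0 ∧ ∀ t, c t ω = 0 := by
    filter_upwards [h_nonneg, hc, h_free z hz (h_nonneg.mono fun ω h =>
      (add_nonneg h.1 h.2).trans_eq (hz_sum ω).symm)] with ω h hcω hzω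
    rw [hz_sum, add_eq_zero_iff_of_nonneg h.1 h.2, Pi.single_eq_zero_iff, neg_eq_zero,
      neg_eq_zero, Finset.sum_eq_zero_iff_of_nonpos fun t _ => hcω t] at hzω
    exact ⟨hzω.1, fun t => hzω.2 t (Finset.mem_univ t)⟩
  refine ⟨fun t => ?_, h_zero.mono fun _ => And.left⟩
  filter_upwards [hy t, h_sub t, h_zero] with ω hyω h hω
  exact acquisitionCost_neg_nonpos (hba' t ω) h hyω (hω.2 t)

/-- The `ℱ t`-measurable trades available at time `t` at the bid prices `b t` and ask prices
`a t`. -/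
def trades [Preorder κ] (P : Measure Ω) (ℱ : Filtration κ m) (b a : κ → Ω → Fin d → ℝ) (t : κ) :
    Set (Ω → Fin (d + 1) → ℝ) :=
  {x | MemL0 P (ℱ t) (fun ω => (tradeCone (b t ω) (a t ω) : Set (Fin (d + 1) → ℝ))) x}

/-- The terminal portfolios that are dominated by the outcome of a trading strategy. -/
def superhedgeable [Preorder κ] (P : Measure Ω) (ℱ : Filtration κ m)
    (b a : κ → Ω → Fin d → ℝ) : Set (Ω → Fin (d + 1) → ℝ) :=
  ∑ t, trades P ℱ b a t + {x | MemL0 P m (fun _ => (nonposCone (d + 1) : Set (Fin (d + 1) → ℝ))) x}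

lemma trades_subset_superhedgeable [Preorder κ] {ℱ : Filtration κ m} (t : κ) :
    trades P ℱ b a t ⊆ superhedgeable P ℱ b a := by
  intro x hx
  refine mem_add.2 ⟨x, ?_, 0, (isClosedL0Cone_memL0 m _).zero_mem, add_zero x⟩
  classical
  refine (mem_finsetSum _ _ _).2 ⟨Pi.single t x, fun {s} _ => ?_, Fintype.sum_pi_single' t x⟩
  rcases eq_or_ne s t with rfl | hst
  · rwa [Pi.single_eq_same]
  · rw [Pi.single_eq_of_ne hst]
    exact (isClosedL0Cone_memL0 (ℱ s) _).zero_mem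

lemma mem_superhedgeable_of_nonpos [Preorder κ] {ℱ : Filtration κ m} {x : Ω → Fin (d + 1) → ℝ}
    (hx_meas : Measurable x) (hx : x ≤ᵐ[P] 0) : x ∈ superhedgeable P ℱ b a := by
  refine mem_add.2 ⟨0, (mem_finsetSum _ _ _).2 ⟨0, fun {t} _ => ?_, by simp⟩, x, ⟨hx_meas, ?_⟩,
    zero_add x⟩
  · exact (isClosedL0Cone_memL0 (ℱ t) _).zero_mem
  · exact hx.mono fun ω => mem_nonposCone.2

section Superhedging

variable [LinearOrder κ] {ℱ : Filtration κ m} (h_free : IsArbitrageFree P ℱ b' a')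
  (hb' : ∀ t, Measurable[ℱ t] (b' t)) (ha' : ∀ t, Measurable[ℱ t] (a' t)) (hba' : b' ≤ a')
  (h_sub : ∀ t, ∀ᵐ ω ∂P, ∀ i,
    Icc (b' t ω i) (a' t ω i) ⊆ intrinsicInterior ℝ (Icc (b t ω i) (a t ω i)))

include h_free hb' ha' hba' h_sub

lemma IsArbitrageFree.isClosedL0Cone_superhedgeable [IsFiniteMeasure P] :
    IsClosedL0Cone ⊥ m P (superhedgeable P ℱ b a) := by
  refine IsClosedL0Cone.finset_sum_add (fun t => isClosedL0Cone_memL0 (ℱ t) _)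
    (isClosedL0Cone_memL0 m fun _ => nonposCone (d + 1)) (fun y hy k hk h_sum => ?_) bot_le
    fun _ _ => bot_le
  have hy_mem (t : κ) : y t ∈ trades P ℱ b a t := hy t (Finset.mem_univ t)
  obtain ⟨hy_neg, hk_zero⟩ := h_free.neg_mem_tradeCone hb' ha' hba' h_sub
    (fun t => (hy_mem t).1) (fun t => (hy_mem t).2) (hk.2.mono fun _ => mem_nonposCone.1)
    fun ω => by simpa using congrFun h_sum ω
  exact ⟨fun t _ => ⟨(hy_mem t).1.neg, hy_neg t⟩, hk.1.neg,
    hk_zero.mono fun ω hω => by simp [hω]⟩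

lemma IsArbitrageFree.eq_zero_of_mem_superhedgeable {x : Ω → Fin (d + 1) → ℝ}
    (hx : x ∈ superhedgeable P ℱ b a) (hx_nonneg : 0 ≤ᵐ[P] x) : ∀ᵐ ω ∂P, x ω = 0 := by
  obtain ⟨w, hw, k, hk, rfl⟩ := mem_add.1 hx
  obtain ⟨y, hy, rfl⟩ := (mem_finsetSum _ _ _).1 hw
  have hy_mem (t : κ) : y t ∈ trades P ℱ b a t := hy (Finset.mem_univ t)
  have hk_nonpos : ∀ᵐ ω ∂P, k ω ≤ 0 := hk.2.mono fun _ => mem_nonposCone.1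
  obtain ⟨-, h_zero⟩ := h_free.neg_mem_tradeCone hb' ha' hba' h_sub (k := -∑ t, y t)
    (fun t => (hy_mem t).1) (fun t => (hy_mem t).2)
    (by
      filter_upwards [hx_nonneg, hk_nonpos] with ω hω hkω
      exact neg_nonpos.2 (hω.trans (add_le_of_nonpos_right hkω)))
    fun ω => by simp
  filter_upwards [h_zero, hx_nonneg, hk_nonpos] with ω hω hxω hkω
  refine le_antisymm ?_ hxω
  rw [Pi.add_apply, neg_eq_zero.1 hω, zero_add]
  exact hkω

theorem IsArbitrageFree.exists_martingale_mem_Icc [IsFiniteMeasure P] [NeZero P]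
    (hb : ∀ t, Measurable[ℱ t] (b t)) (ha : ∀ t, Measurable[ℱ t] (a t)) :
    ∃ Q : Measure Ω, IsProbabilityMeasure Q ∧ Q ≪ P ∧ P ≪ Q ∧
      ∃ S : κ → Ω → Fin d → ℝ, Martingale S ℱ Q ∧
        ∀ t i, ∀ᵐ ω ∂P, S t ω i ∈ Icc (b t ω i) (a t ω i) := by
  have h_le (t : κ) : ∀ᵐ ω ∂P, ∀ i, b t ω i ≤ a t ω i := by
    filter_upwards [h_sub t] with ω hω i
    exact nonempty_Icc.1 ((nonempty_Icc.2 (hba' t ω i)).mono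
      ((hω i).trans intrinsicInterior_subset))
  have h_null (D : Set Ω) (hD : MeasurableSet[m] D)
      (h_mem : D.indicator (fun _ => Pi.single 0 1) ∈ superhedgeable P ℱ b a) : P D = 0 := by
    refine measure_eq_zero_iff_ae_notMem.2 ?_
    filter_upwards [h_free.eq_zero_of_mem_superhedgeable hb' ha' hba' h_sub h_mem
      (ae_of_all _ (indicator_nonneg fun _ _ => Pi.single_nonneg.2 zero_le_one))] with ω hω hωD
    simp [hωD] at hω
  obtain ⟨Q, hQ, hQP, hPQ, X, hX, hX_cash, hX_trade⟩ :=
    (h_free.isClosedL0Cone_superhedgeable hb' ha' hba'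
      h_sub).exists_martingale_dotProduct_nonpos
      (fun t => isClosedL0Cone_memL0 (ℱ t) _)
      trades_subset_superhedgeable
      (fun D hD => mem_superhedgeable_of_nonpos (measurable_const.indicator hD) <| ae_of_all _ <|
        indicator_nonpos fun _ _ => neg_nonpos.2 (Pi.single_nonneg.2 zero_le_one)) h_null
  refine ⟨Q, hQ, hQP, hPQ, _, martingale_continuousLinearMap_comp hX
    (ContinuousLinearMap.pi fun i : Fin d => ContinuousLinearMap.proj i.succ), fun t i => ?_⟩
  have h_buy : (fun ω => Pi.single i.succ 1 - Pi.single 0 (a t ω i)) ∈ trades P ℱ b a t :=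
    ⟨measurable_const.sub ((measurable_update (0 : Fin (d + 1) → ℝ)).comp
      ((measurable_pi_apply i).comp (ha t))), (h_le t).mono fun _ h => buy_mem_tradeCone (h i)⟩
  have h_sell : (fun ω => Pi.single 0 (b t ω i) - Pi.single i.succ 1) ∈ trades P ℱ b a t :=
    ⟨((measurable_update (0 : Fin (d + 1) → ℝ)).comp ((measurable_pi_apply i).comp
      (hb t))).sub measurable_const, (h_le t).mono fun _ h => sell_mem_tradeCone (h i)⟩
  filter_upwards [hX_cash t, hX_trade t _ h_buy, hX_trade t _ h_sell] with ω h_cash h_ask h_bid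
  simp only [sub_dotProduct, single_dotProduct, one_mul] at h_cash h_ask h_bid
  rw [h_cash, mul_one] at h_ask h_bid
  exact ⟨sub_nonpos.1 h_bid, sub_nonpos.1 h_ask⟩

end Superhedging

end BidAskMarket

section MartingaleCharacterization

open scoped Matrix

variable {Ω : Type*} {d T : ℕ} {m : MeasurableSpace Ω} {P Q : Measure Ω}
  {ℱ : Filtration (Fin (T + 1)) m}

lemma measurable_bid {_ : MeasurableSpace Ω} {M : Ω → Matrix (Fin (d + 1)) (Fin (d + 1)) ℝ}
    (hM : ∀ i j, Measurable fun ω => M ω i j) :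
    Measurable fun ω (i : Fin d) => 1 / M ω i.succ 0 :=
  measurable_pi_lambda _ fun i => (hM i.succ 0).const_div 1

lemma measurable_ask {_ : MeasurableSpace Ω} {M : Ω → Matrix (Fin (d + 1)) (Fin (d + 1)) ℝ}
    (hM : ∀ i j, Measurable fun ω => M ω i j) : Measurable fun ω (i : Fin d) => M ω 0 i.succ :=
  measurable_pi_lambda _ fun i => hM 0 i.succ

lemma isArbitrageFree_of_forall_memAttainable
    {M : Fin (T + 1) → Ω → Matrix (Fin (d + 1)) (Fin (d + 1)) ℝ}
    (hM : ∀ t ω, IsBidAskMatrix (M t ω))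
    (h_attain : ∀ x : Ω → Fin (d + 1) → ℝ, MemAttainable P ℱ M x →
      MemL0 P (ℱ (Fin.last T)) (fun _ => {v | ∀ i, 0 ≤ v i}) x → ∀ᵐ ω ∂P, x ω = 0) :
    IsArbitrageFree P ℱ (fun t ω i => 1 / M t ω i.succ 0) fun t ω i => M t ω 0 i.succ := by
  intro z hz h_nonneg
  refine h_attain (fun ω => ∑ t, z t ω) ⟨z, fun t => ⟨(hz t).1, ?_⟩, fun ω => rfl⟩
    ⟨Finset.measurable_fun_sum _ fun t _ => (hz t).1.mono (ℱ.mono (Fin.le_last t)) le_rfl,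
      h_nonneg⟩
  exact (hz t).2.mono fun ω => (hM t ω).neg_mem_solvencyCone

theorem RobustNoArbitrage.exists_martingale_mem_intrinsicInterior [IsFiniteMeasure P] [NeZero P]
    {M : Fin (T + 1) → Ω → Matrix (Fin (d + 1)) (Fin (d + 1)) ℝ} (h : RobustNoArbitrage P ℱ M)
    (hM : ∀ t i j, Measurable[ℱ t] fun ω => M t ω i j) :
    ∃ Q : Measure Ω, IsProbabilityMeasure Q ∧ Q ≪ P ∧ P ≪ Q ∧
      ∃ S : Fin (T + 1) → Ω → Fin d → ℝ, Martingale S ℱ Q ∧ ∀ t i, ∀ᵐ ω ∂P,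
        S t ω i ∈ intrinsicInterior ℝ (Icc (1 / M t ω i.succ 0) (M t ω 0 i.succ)) := by
  obtain ⟨M', hM'_meas, hM', h_sub, h_attain⟩ := h
  have h_mid (t : Fin (T + 1)) : ∀ᵐ ω ∂P, ∀ i : Fin d, _ := ae_all_iff.2 fun i =>
    (h_sub t 0 i.succ).mono fun ω =>
      Icc_midpoints_subset_intrinsicInterior_Icc ((hM' t ω).one_div_le 0 i.succ)
  obtain ⟨Q, hQ, hQP, hPQ, S, hS, hS_mem⟩ :=
    (isArbitrageFree_of_forall_memAttainable hM' h_attain).exists_martingale_mem_Icc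
      (fun t => measurable_bid (hM'_meas t)) (fun t => measurable_ask (hM'_meas t))
      (fun t ω i => (hM' t ω).one_div_le 0 i.succ)
      (fun t => (h_mid t).mono fun ω hω i => (hω i).2)
      (fun t => ((measurable_bid (hM t)).add (measurable_bid (hM'_meas t))).div_const fun _ => 2)
      (fun t => ((measurable_ask (hM t)).add (measurable_ask (hM'_meas t))).div_const fun _ => 2)
  refine ⟨Q, hQ, hQP, hPQ, S, hS, fun t i => ?_⟩
  filter_upwards [h_mid t, hS_mem t i] with ω h_sub hS
  exact (h_sub i).1 hS

/-- The matrix of the exchange rates `s j / s i` without transaction costs at the prices `s`.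
Going through the logarithm makes it a bid-ask matrix for every `s`; the entries are the quotients
when the prices are positive. -/
noncomputable def exchangeMatrix (s : Fin d → ℝ) : Matrix (Fin d) (Fin d) ℝ :=
  Matrix.of fun i j => Real.exp (Real.log (s j) - Real.log (s i))

lemma exchangeMatrix_apply {s : Fin d → ℝ} (hs : ∀ i, 0 < s i) (i j : Fin d) :
    exchangeMatrix s i j = s j / s i := by
  rw [exchangeMatrix, Matrix.of_apply, Real.exp_sub, Real.exp_log (hs j), Real.exp_log (hs i)]

lemma one_div_exchangeMatrix (s : Fin d → ℝ) (i j : Fin d) :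
    1 / exchangeMatrix s j i = exchangeMatrix s i j := by
  rw [exchangeMatrix, Matrix.of_apply, Matrix.of_apply, one_div, ← Real.exp_neg, neg_sub]

lemma isBidAskMatrix_exchangeMatrix (s : Fin d → ℝ) : IsBidAskMatrix (exchangeMatrix s) := by
  refine ⟨fun i j => Real.exp_pos _, fun i => ?_, fun i j k => le_of_eq ?_⟩
  · rw [exchangeMatrix, Matrix.of_apply, sub_self, Real.exp_zero]
  · simp only [exchangeMatrix, Matrix.of_apply, ← Real.exp_add]
    rw [add_comm, sub_add_sub_cancel]

lemma eq_zero_of_dotProduct_eq_zero {v s : Fin d → ℝ} (hv : 0 ≤ v) (hs : ∀ i, 0 < s i)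
    (h : v ⬝ᵥ s = 0) : v = 0 := by
  funext i
  have h_mul := (Finset.sum_eq_zero_iff_of_nonneg fun j _ => mul_nonneg (hv j) (hs j).le).1 h i
    (Finset.mem_univ i)
  exact (mul_eq_zero.1 h_mul).resolve_right (hs i).ne'

theorem robustNoArbitrage_of_martingale [IsFiniteMeasure Q]
    {M : Fin (T + 1) → Ω → Matrix (Fin d) (Fin d) ℝ}
    (hQP : Q ≪ P) (hPQ : P ≪ Q) {R : Fin (T + 1) → Ω → Fin d → ℝ} (hR : Martingale R ℱ Q)
    (hR_pos : ∀ t, ∀ᵐ ω ∂P, ∀ i, 0 < R t ω i)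
    (hR_mem : ∀ t i j, ∀ᵐ ω ∂P,
      R t ω j / R t ω i ∈ intrinsicInterior ℝ (Icc (1 / M t ω j i) (M t ω i j))) :
    RobustNoArbitrage P ℱ M := by
  refine ⟨fun t ω => exchangeMatrix (R t ω), fun t i j => ?_,
    fun t ω => isBidAskMatrix_exchangeMatrix _, fun t i j => ?_, ?_⟩
  · have hR_meas := (hR.stronglyMeasurable t).measurable
    exact (((measurable_pi_apply j).comp hR_meas).log.sub
      ((measurable_pi_apply i).comp hR_meas).log).exp
  · filter_upwards [hR_pos t, hR_mem t i j] with ω h_pos h_mem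
    rwa [one_div_exchangeMatrix, Icc_self, singleton_subset_iff, exchangeMatrix_apply h_pos]
  · rintro x ⟨y, hy, hyx⟩ ⟨-, hx⟩
    have hy_nonpos (t : Fin (T + 1)) :
        ∀ᵐ ω ∂P, dotProductCLM (Fin d) (y t ω) (R t ω) ≤ 0 := by
      filter_upwards [(hy t).2, hR_pos t] with ω hyω h_pos
      have h_nonneg := dotProduct_nonneg_of_mem_solvencyCone (fun i => (h_pos i).le) (fun i j =>
        by rw [exchangeMatrix_apply h_pos, div_mul_cancel₀ _ (h_pos i).ne']) hyω
      rwa [neg_dotProduct, neg_nonneg, ← dotProductCLM_apply] at h_nonneg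
    have h_nonneg : ∀ᵐ ω ∂P,
        0 ≤ dotProductCLM (Fin d) (∑ t, y t ω) (R (Fin.last T) ω) := by
      filter_upwards [hx, hR_pos (Fin.last T)] with ω hxω h_pos
      rw [hyx, dotProductCLM_apply]
      exact Finset.sum_nonneg fun i _ => mul_nonneg (hxω i) (h_pos i).le
    have h_last : ∀ᵐ ω ∂Q, dotProductCLM (Fin d) (∑ t, y t ω) (R (Fin.last T) ω) = 0 :=
      ae_pairing_sum_eq_zero_of_martingale _ hR (fun t => (hy t).1.stronglyMeasurable)
        (fun t => hQP.ae_le (hy_nonpos t)) (fun t _ => Fin.le_last t) (hQP.ae_le h_nonneg)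
    filter_upwards [hx, hR_pos (Fin.last T), hPQ.ae_le h_last] with ω hxω h_pos h_zero
    rw [hyx, dotProductCLM_apply] at h_zero
    exact eq_zero_of_dotProduct_eq_zero hxω h_pos h_zero

lemma martingale_fin_cons [IsFiniteMeasure Q] {S : Fin (T + 1) → Ω → Fin d → ℝ}
    (hS : Martingale S ℱ Q) (c : ℝ) :
    Martingale (fun t ω => (Fin.cons c (S t ω) : Fin (d + 1) → ℝ)) ℱ Q := by
  let L : (Fin d → ℝ) →L[ℝ] Fin (d + 1) → ℝ :=
    ContinuousLinearMap.pi (Fin.cons 0 fun i => ContinuousLinearMap.proj i)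
  have h_eq : (fun t ω => (Fin.cons c (S t ω) : Fin (d + 1) → ℝ)) =
      (fun _ _ => Pi.single 0 c) + fun t ω => L (S t ω) := by
    ext t ω i
    cases i using Fin.cases <;> simp [L]
  rw [h_eq]
  exact (martingale_const ℱ Q _).add (martingale_continuousLinearMap_comp hS L)

theorem robustNoArbitrage_of_bank_account_martingale [IsFiniteMeasure Q]
    {b a : Fin (T + 1) → Ω → Fin (d + 1) → ℝ}
    (hb₀ : ∀ t ω, b t ω 0 = 1) (ha₀ : ∀ t ω, a t ω 0 = 1)
    (hb_pos : ∀ t ω, ∀ i : Fin d, 0 < b t ω i.succ)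
    {M : Fin (T + 1) → Ω → Matrix (Fin (d + 1)) (Fin (d + 1)) ℝ}
    (hM : ∀ t ω i j, M t ω i j = if i = j then 1 else a t ω j / b t ω i)
    (hQP : Q ≪ P) (hPQ : P ≪ Q) {S : Fin (T + 1) → Ω → Fin d → ℝ} (hS : Martingale S ℱ Q)
    (hS_mem : ∀ t, ∀ i : Fin d, ∀ᵐ ω ∂P,
      S t ω i ∈ intrinsicInterior ℝ (Icc (b t ω i.succ) (a t ω i.succ))) :
    RobustNoArbitrage P ℱ M := by
  let R (t : Fin (T + 1)) (ω : Ω) : Fin (d + 1) → ℝ := Fin.cons 1 (S t ω)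
  have hb (t : Fin (T + 1)) (ω : Ω) (i : Fin (d + 1)) : 0 < b t ω i := by
    cases i using Fin.cases with
    | zero => exact hb₀ t ω ▸ one_pos
    | succ i => exact hb_pos t ω i
  have hR_mem (t : Fin (T + 1)) :
      ∀ᵐ ω ∂P, ∀ i, R t ω i ∈ intrinsicInterior ℝ (Icc (b t ω i) (a t ω i)) := by
    filter_upwards [ae_all_iff.2 (hS_mem t)] with ω hω i
    cases i using Fin.cases with
    | zero => exact mem_intrinsicInterior_Icc.2 (Or.inr ⟨hb₀ t ω, (ha₀ t ω).symm⟩)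
    | succ i => exact hω i
  have hR_pos (t : Fin (T + 1)) : ∀ᵐ ω ∂P, ∀ i, 0 < R t ω i := (hR_mem t).mono fun ω hω i =>
    (hb t ω i).trans_le (intrinsicInterior_subset (hω i)).1
  refine robustNoArbitrage_of_martingale hQP hPQ (martingale_fin_cons hS 1) hR_pos
    fun t i j => ?_
  filter_upwards [hR_mem t, hR_pos t] with ω hω h_pos
  rw [hM, hM]
  rcases eq_or_ne i j with rfl | hij
  · rw [div_self (h_pos i).ne', if_pos rfl, one_div_one, Icc_self, intrinsicInterior_singleton]
    exact mem_singleton 1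
  · rw [if_neg hij, if_neg hij.symm, one_div_div]
    exact div_mem_intrinsicInterior_Icc (hb t ω i) (hb t ω j) (hω i) (hω j)

theorem bank_account_robust_no_arbitrage_iff_general [IsFiniteMeasure P] [NeZero P]
    {Sb Sa : Fin (T + 1) → Ω → Fin (d + 1) → ℝ}
    (hSbmeas : ∀ t i, Measurable[ℱ t] fun ω => Sb t ω i)
    (hSameas : ∀ t i, Measurable[ℱ t] fun ω => Sa t ω i)
    (hb0 : ∀ t ω, Sb t ω 0 = 1) (ha0 : ∀ t ω, Sa t ω 0 = 1)
    (hpos : ∀ t ω, ∀ i : Fin d, 0 < Sb t ω i.succ)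
    {Pi_ : Fin (T + 1) → Ω → Matrix (Fin (d + 1)) (Fin (d + 1)) ℝ}
    (hPi : ∀ t ω i j, Pi_ t ω i j = if i = j then 1 else Sa t ω j / Sb t ω i) :
    RobustNoArbitrage P ℱ Pi_ ↔
      ∃ Q : Measure Ω, IsProbabilityMeasure Q ∧ Q ≪ P ∧ P ≪ Q ∧
        ∃ S : Fin (T + 1) → Ω → Fin d → ℝ,
          Martingale S ℱ Q ∧
          ∀ t, ∀ i : Fin d, ∀ᵐ ω ∂P,
            S t ω i ∈ intrinsicInterior ℝ (Icc (Sb t ω i.succ) (Sa t ω i.succ)) := by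
  constructor
  · intro h
    have hPi_meas (t : Fin (T + 1)) (i j : Fin (d + 1)) :
        Measurable[ℱ t] fun ω => Pi_ t ω i j := by
      simp only [hPi]
      split_ifs
      exacts [measurable_const, (hSameas t j).div (hSbmeas t i)]
    simpa [hPi, hb0, ha0, Fin.succ_ne_zero, (Fin.succ_ne_zero _).symm] using
      h.exists_martingale_mem_intrinsicInterior hPi_meas
  · rintro ⟨Q, hQ, hQP, hPQ, S, hS, hS_mem⟩
    exact robustNoArbitrage_of_bank_account_martingale hb0 ha0 hpos hPi hQP hPQ hS hS_mem

end MartingaleCharacterization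

/-- Market model with a bank account (asset `0`; the other `d` assets are
indexed by `i.succ`, `i : Fin d`, so there are `d + 1 ≥ 2` assets in total):
NAʳ holds iff there exist a probability measure `Q` equivalent to `P` and a
`d`-dimensional `Q`-martingale `S` adapted to `(𝔉_t)` with
`S_t^i(ω) ∈ ri [S_t^{b,i}(ω), S_t^{a,i}(ω)]` a.e. for all `i`, `t`. -/
theorem bank_account_robust_no_arbitrage_iff
    {Ω : Type*} {d T : ℕ} (hd : 1 ≤ d)
    {m : MeasurableSpace Ω} (P : Measure Ω) [IsProbabilityMeasure P]
    (ℱ : Filtration (Fin (T + 1)) m)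
    (hcomplete : ∀ t : Fin (T + 1), ∀ s : Set Ω,
      MeasurableSet[m] s → P s = 0 → MeasurableSet[ℱ t] s)
    (Sb Sa : Fin (T + 1) → Ω → Fin (d + 1) → ℝ)
    (hSbmeas : ∀ t i, Measurable[ℱ t] fun ω => Sb t ω i)
    (hSameas : ∀ t i, Measurable[ℱ t] fun ω => Sa t ω i)
    (hb0 : ∀ t ω, Sb t ω 0 = 1) (ha0 : ∀ t ω, Sa t ω 0 = 1)
    (hpos : ∀ t ω, ∀ i : Fin d, 0 < Sb t ω i.succ)
    (hbale : ∀ t ω, ∀ i : Fin d, Sb t ω i.succ ≤ Sa t ω i.succ)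
    (Pi_ : Fin (T + 1) → Ω → Matrix (Fin (d + 1)) (Fin (d + 1)) ℝ)
    (hPi : ∀ t ω i j, Pi_ t ω i j = if i = j then 1 else Sa t ω j / Sb t ω i) :
    RobustNoArbitrage P ℱ Pi_ ↔
      ∃ Q : Measure Ω, IsProbabilityMeasure Q ∧ Q ≪ P ∧ P ≪ Q ∧
        ∃ S : Fin (T + 1) → Ω → Fin d → ℝ,
          Martingale S ℱ Q ∧
          ∀ t, ∀ i : Fin d, ∀ᵐ ω ∂P,
            S t ω i ∈ intrinsicInterior ℝ (Icc (Sb t ω i.succ) (Sa t ω i.succ)) := by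
  exact bank_account_robust_no_arbitrage_iff_general hSbmeas hSameas hb0 ha0 hpos hPi
end

section
/- Let (Ω,𝔉,P) be a probability space and ℋ ⊆ 𝔉 a P-complete sub-σ-algebra. Let F_1, F_2, F be ℋ-measurable set-valued maps from Ω to the nonempty closed subsets of ℝ^d (ℋ-measurable meaning {ω : F(ω) ∩ V ≠ ∅} ∈ ℋ for every open V ⊆ ℝ^d) such that F_1(ω) + F_2(ω) = F(ω) (Minkowski sum) for a.e. ω. Then L⁰(F_1,ℋ) + L⁰(F_2,ℋ) = L⁰(F,ℋ); that is, a function ξ:Ω→ℝ^d is ℋ-measurable with ξ(ω)∈F(ω) a.e. if and only if ξ = ξ_1 + ξ_2 for some ℋ-measurable functions ξ_i with ξ_i(ω) ∈ F_i(ω) a.e. (i=1,2). -/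
open MeasureTheory Set Pointwise

/-- A set-valued map `F : Ω → Set (ℝ^d)` is `ℋ`-measurable if
`{ω : F(ω) ∩ V ≠ ∅} ∈ ℋ` for every open `V`. -/
def SetValuedMeasurable {Ω : Type*} {d : ℕ} (H : MeasurableSpace Ω)
    (F : Ω → Set (Fin d → ℝ)) : Prop :=
  ∀ V : Set (Fin d → ℝ), IsOpen V → MeasurableSet[H] {ω | (F ω ∩ V).Nonempty}

/-!
A function `ξ` splits as `ξ₁ + ξ₂` along the closed-valued `F₁` and `F₂` exactly when `ξ₁` is a
selection of the multifunction of zeros of `x ↦ d(x, F₁ ω) + d(ξ ω - x, F₂ ω)`. This function is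
measurable in `ω` and continuous in `x`, so its minimum over a compact set `K` is an infimum over
a countable dense subset of `K`, and the event that it vanishes somewhere on `K` is measurable.
Since `E` is `σ`-compact, open sets may replace compact ones, and the Kuratowski–Ryll-Nardzewski
theorem yields a measurable `ξ₁`, defined on all of `Ω` and valid wherever `ξ ω ∈ F₁ ω + F₂ ω`.
-/

open Metric TopologicalSpace Filter Topology
open scoped ENNReal

/-- Measurability of a multifunction (set-valued map) in the sense of Effros: the set of points
whose value meets a given open set is measurable. `SetValuedMeasurable H F` is the case of values
in `ℝ^d`. -/
def EffrosMeasurable {Ω E : Type*} [MeasurableSpace Ω] [TopologicalSpace E]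
    (F : Ω → Set E) : Prop :=
  ∀ V, IsOpen V → MeasurableSet {ω | (F ω ∩ V).Nonempty}

section Operations

variable {Ω E : Type*} [MeasurableSpace Ω] {F : Ω → Set E}

theorem EffrosMeasurable.inter_isOpen [TopologicalSpace E] (hF : EffrosMeasurable F) {U : Set E}
    (hU : IsOpen U) : EffrosMeasurable fun ω ↦ F ω ∩ U := fun V hV ↦ by
  simpa only [inter_assoc] using hF (U ∩ V) (hU.inter hV)

theorem EffrosMeasurable.measurable_infEDist [PseudoEMetricSpace E] (hF : EffrosMeasurable F)
    (x : E) : Measurable fun ω ↦ infEDist x (F ω) := by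
  refine measurable_of_Iio fun r ↦ ?_
  convert hF (eball x r) isOpen_eball using 1
  ext ω
  simp only [mem_preimage, mem_Iio, infEDist_lt_iff, mem_ofPred_eq, Set.Nonempty, mem_inter_iff,
    mem_eball']

variable [MetricSpace E] [SecondCountableTopology E] [MeasurableSpace E] [OpensMeasurableSpace E]

theorem EffrosMeasurable.measurable_infEDist_comp (hF : EffrosMeasurable F) {ξ : Ω → E}
    (hξ : Measurable ξ) : Measurable fun ω ↦ infEDist (ξ ω) (F ω) :=
  (measurable_uncurry_of_continuous_of_measurable (u := fun x ω ↦ infEDist x (F ω))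
    (fun _ ↦ continuous_infEDist) hF.measurable_infEDist).comp (hξ.prodMk measurable_id)

theorem EffrosMeasurable.inter_eball (hF : EffrosMeasurable F) {ξ : Ω → E} (hξ : Measurable ξ)
    (ε : ℝ≥0∞) : EffrosMeasurable fun ω ↦ F ω ∩ eball (ξ ω) ε := by
  intro V hV
  convert measurableSet_lt ((hF.inter_isOpen hV).measurable_infEDist_comp hξ)
    (measurable_const (a := ε)) using 1
  ext ω
  simp only [mem_ofPred_eq, infEDist_lt_iff, Set.Nonempty, mem_inter_iff, mem_eball']
  grind

end Operations

section Approximation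

theorem measurable_sInf_nat {Ω : Type*} [MeasurableSpace Ω] {p : Ω → ℕ → Prop}
    (hp : ∀ k, MeasurableSet {ω | p ω k}) : Measurable fun ω ↦ sInf {k | p ω k} := by
  refine measurable_of_Iio fun n ↦ ?_
  have hset : (fun ω ↦ sInf {k | p ω k}) ⁻¹' Iio n =
      (⋃ k ∈ Iio n, {ω | p ω k}) ∪ ({_ω | 0 < n} ∩ ⋂ k, {ω | p ω k}ᶜ) := by
    ext ω
    by_cases h : ∃ k, p ω k
    · have hlt : sInf {k | p ω k} < n ↔ ∃ k, p ω k ∧ k < n :=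
        csInf_lt_iff (OrderBot.bddBelow _) h
      simp [hlt, not_forall_not.2 h, and_comm]
    · simp_all
  rw [hset]
  exact (MeasurableSet.biUnion (to_countable _) fun k _ ↦ hp k).union
    ((MeasurableSet.const _).inter (.iInter fun k ↦ (hp k).compl))

variable {E : Type*} [PseudoEMetricSpace E] [SeparableSpace E] [Nonempty E]

/-- The first term of the standard dense sequence of `E` lying within distance `ε` of some point
of `A`; the initial term of the sequence if there is none. -/
noncomputable def nearPoint (A : Set E) (ε : ℝ≥0∞) : E :=
  denseSeq E (sInf {k | (A ∩ eball (denseSeq E k) ε).Nonempty})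

/-- The decreasing subsets of `A` obtained by intersecting successively with the open ball of
radius `2⁻ⁿ` about the near point of the previous set. -/
noncomputable def shrinking (A : Set E) : ℕ → Set E
  | 0 => A
  | n + 1 => shrinking A n ∩ eball (nearPoint (shrinking A n) (2⁻¹ ^ n)) (2⁻¹ ^ n)

/-- The centres of the balls defining `shrinking A`, which approximate a point of `closure A`. -/
noncomputable def shrinkingCenter (A : Set E) (n : ℕ) : E :=
  nearPoint (shrinking A n) (2⁻¹ ^ n)

theorem nonempty_inter_eball_nearPoint {A : Set E} (hA : A.Nonempty) {ε : ℝ≥0∞} (hε : ε ≠ 0) :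
    (A ∩ eball (nearPoint A ε) ε).Nonempty := by
  obtain ⟨x, hx⟩ := hA
  obtain ⟨_, ⟨k, rfl⟩, hxk⟩ :=
    EMetric.mem_closure_iff.1 (denseRange_denseSeq E x) ε (pos_iff_ne_zero.2 hε)
  exact Nat.sInf_mem (s := {k | (A ∩ eball (denseSeq E k) ε).Nonempty}) ⟨k, x, hx, hxk⟩

theorem nonempty_shrinking {A : Set E} (hA : A.Nonempty) : ∀ n, (shrinking A n).Nonempty
  | 0 => hA
  | n + 1 => nonempty_inter_eball_nearPoint (nonempty_shrinking hA n) (by simp)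

theorem shrinking_subset (A : Set E) : ∀ n, shrinking A n ⊆ A
  | 0 => Subset.rfl
  | n + 1 => inter_subset_left.trans (shrinking_subset A n)

theorem edist_shrinkingCenter_lt {A : Set E} {n : ℕ} {x : E} (hx : x ∈ shrinking A (n + 1)) :
    edist x (shrinkingCenter A n) < 2⁻¹ ^ n :=
  hx.2

theorem cauchySeq_shrinkingCenter {A : Set E} (hA : A.Nonempty) :
    CauchySeq (shrinkingCenter A) := by
  refine cauchySeq_of_edist_le_geometric 2⁻¹ 2 (by simp) (by simp) fun n ↦ ?_
  obtain ⟨x, hx⟩ := nonempty_shrinking hA (n + 2)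
  calc edist (shrinkingCenter A n) (shrinkingCenter A (n + 1))
      ≤ edist x (shrinkingCenter A n) + edist x (shrinkingCenter A (n + 1)) :=
        edist_triangle_left _ _ _
    _ ≤ 2⁻¹ ^ n + 2⁻¹ ^ (n + 1) :=
        add_le_add (edist_shrinkingCenter_lt hx.1).le (edist_shrinkingCenter_lt hx).le
    _ ≤ 2⁻¹ ^ n + 2⁻¹ ^ n := by
        gcongr _ + ?_
        exact pow_le_pow_right_of_le_one' (by simp) n.le_succ
    _ = 2 * 2⁻¹ ^ n := (two_mul _).symm

theorem mem_of_tendsto_shrinkingCenter {A : Set E} (hA : A.Nonempty) (hcl : IsClosed A) {a : E}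
    (ha : Tendsto (shrinkingCenter A) atTop (𝓝 a)) : a ∈ A := by
  have hle : ∀ n, infEDist (shrinkingCenter A n) A ≤ 2⁻¹ ^ n := fun n ↦ by
    obtain ⟨x, hx⟩ := nonempty_shrinking hA (n + 1)
    refine (infEDist_le_edist_of_mem (shrinking_subset A _ hx)).trans ?_
    rw [edist_comm]
    exact (edist_shrinkingCenter_lt hx).le
  rw [mem_iff_infEDist_zero_of_closed hcl, ← nonpos_iff_eq_zero]
  exact le_of_tendsto_of_tendsto' ((continuous_infEDist.tendsto a).comp ha)
    (ENNReal.tendsto_pow_atTop_nhds_zero_of_lt_one (by simp)) hle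

theorem EffrosMeasurable.measurable_nearPoint {Ω : Type*} [MeasurableSpace Ω] [MeasurableSpace E]
    {F : Ω → Set E} (hF : EffrosMeasurable F) (ε : ℝ≥0∞) :
    Measurable fun ω ↦ nearPoint (F ω) ε :=
  (measurable_from_nat (f := denseSeq E)).comp
    (measurable_sInf_nat fun _ ↦ hF _ isOpen_eball)

end Approximation

section Selection

variable {Ω E : Type*} [MeasurableSpace Ω] [MetricSpace E] [SeparableSpace E] [Nonempty E]
  [MeasurableSpace E] [BorelSpace E] {F : Ω → Set E}

theorem EffrosMeasurable.shrinking (hF : EffrosMeasurable F) :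
    ∀ n, EffrosMeasurable fun ω ↦ shrinking (F ω) n
  | 0 => hF
  | n + 1 =>
    haveI := UniformSpace.secondCountable_of_separable E
    (hF.shrinking n).inter_eball ((hF.shrinking n).measurable_nearPoint _) _

/-- The **Kuratowski–Ryll-Nardzewski selection theorem**. -/
theorem EffrosMeasurable.exists_measurable_selection [CompleteSpace E] (hF : EffrosMeasurable F)
    (hcl : ∀ ω, IsClosed (F ω)) :
    ∃ g : Ω → E, Measurable g ∧ ∀ ω, (F ω).Nonempty → g ω ∈ F ω := by
  have := UniformSpace.secondCountable_of_separable E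
  refine ⟨fun ω ↦ limUnder atTop (shrinkingCenter (F ω)), ?_, fun ω hω ↦ ?_⟩
  · exact (StronglyMeasurable.limUnder fun n ↦
      ((hF.shrinking n).measurable_nearPoint (2⁻¹ ^ n)).stronglyMeasurable).measurable
  · exact mem_of_tendsto_shrinkingCenter hω (hcl ω)
      (tendsto_nhds_limUnder (cauchySeq_tendsto_of_complete (cauchySeq_shrinkingCenter hω)))

end Selection

section Caratheodory

theorem measurable_iInf_of_continuous {Ω X α : Type*} [MeasurableSpace Ω] [TopologicalSpace X]
    [SeparableSpace X] [ConditionallyCompleteLinearOrder α] [TopologicalSpace α] [OrderTopology α]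
    [SecondCountableTopology α] [MeasurableSpace α] [BorelSpace α] {f : Ω → X → α}
    (hm : ∀ x, Measurable fun ω ↦ f ω x) (hc : ∀ ω, Continuous (f ω)) :
    Measurable fun ω ↦ ⨅ x, f ω x := by
  obtain ⟨D, hD, hdense⟩ := exists_countable_dense X
  have := hD.to_subtype
  simpa only [hdense.ciInf' (hc _)] using Measurable.iInf fun x : D ↦ hm x

theorem iInf_eq_zero_iff_exists_of_continuous {X : Type*} [TopologicalSpace X] [CompactSpace X]
    {f : X → ℝ≥0∞} (hf : Continuous f) : (⨅ x, f x) = 0 ↔ ∃ x, f x = 0 := by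
  refine ⟨fun h ↦ ?_, fun ⟨x, hx⟩ ↦ nonpos_iff_eq_zero.1 (hx ▸ iInf_le f x)⟩
  rcases isEmpty_or_nonempty X with hX | hX
  · exact (ENNReal.top_ne_zero (iInf_of_empty f ▸ h)).elim
  · obtain ⟨x, -, hx⟩ := isCompact_univ.exists_isMinOn univ_nonempty hf.continuousOn
    exact ⟨x, nonpos_iff_eq_zero.1 (h ▸ le_iInf fun y ↦ hx (mem_univ y))⟩

theorem isSigmaCompact_of_isOpen {E : Type*} [PseudoEMetricSpace E] [SigmaCompactSpace E]
    {V : Set E} (hV : IsOpen V) : IsSigmaCompact V := by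
  obtain ⟨C, hC, -, rfl, -⟩ := hV.exists_iUnion_isClosed
  exact isSigmaCompact_iUnion C fun n ↦
    isSigmaCompact_univ.of_isClosed_subset (hC n) (subset_univ _)

variable {Ω E : Type*} [MeasurableSpace Ω]

theorem effrosMeasurable_of_isCompact [PseudoEMetricSpace E] [SigmaCompactSpace E] {F : Ω → Set E}
    (hF : ∀ K, IsCompact K → MeasurableSet {ω | (F ω ∩ K).Nonempty}) : EffrosMeasurable F := by
  intro V hV
  obtain ⟨K, hK, rfl⟩ := isSigmaCompact_of_isOpen hV
  simpa only [inter_iUnion, nonempty_iUnion, ofPred_exists] using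
    MeasurableSet.iUnion fun n ↦ hF (K n) (hK n)

theorem effrosMeasurable_setOf_eq_zero [PseudoEMetricSpace E] [SigmaCompactSpace E]
    {f : Ω → E → ℝ≥0∞} (hm : ∀ x, Measurable fun ω ↦ f ω x) (hc : ∀ ω, Continuous (f ω)) :
    EffrosMeasurable fun ω ↦ {x | f ω x = 0} := by
  refine effrosMeasurable_of_isCompact fun K hK ↦ ?_
  have := hK.isSeparable.separableSpace
  have := isCompact_iff_compactSpace.1 hK
  have hcK : ∀ ω, Continuous fun x : K ↦ f ω x := fun ω ↦ (hc ω).comp continuous_subtype_val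
  convert measurable_iInf_of_continuous (fun x : K ↦ hm x) hcK (measurableSet_singleton 0) using 1
  ext ω
  simp only [mem_preimage, mem_singleton_iff, iInf_eq_zero_iff_exists_of_continuous (hcK ω)]
  simp [Set.Nonempty, and_comm]

end Caratheodory

section Sum

variable {Ω E : Type*} [NormedAddCommGroup E] [ProperSpace E] [MeasurableSpace E] [BorelSpace E]

theorem EffrosMeasurable.exists_measurable_sub_mem [MeasurableSpace Ω] {F₁ F₂ : Ω → Set E}
    (hF₁ : EffrosMeasurable F₁) (hF₂ : EffrosMeasurable F₂) (hcl₁ : ∀ ω, IsClosed (F₁ ω))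
    (hcl₂ : ∀ ω, IsClosed (F₂ ω)) {ξ : Ω → E} (hξ : Measurable ξ) :
    ∃ g : Ω → E, Measurable g ∧ ∀ ω, ξ ω ∈ F₁ ω + F₂ ω → g ω ∈ F₁ ω ∧ ξ ω - g ω ∈ F₂ ω := by
  let f : Ω → E → ℝ≥0∞ := fun ω x ↦ infEDist x (F₁ ω) + infEDist (ξ ω - x) (F₂ ω)
  have hf_measurable : ∀ x, Measurable fun ω ↦ f ω x := fun x ↦
    (hF₁.measurable_infEDist x).add (hF₂.measurable_infEDist_comp (hξ.sub_const x))
  have hf_continuous : ∀ ω, Continuous (f ω) := fun ω ↦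
    continuous_infEDist.add (continuous_infEDist.comp (continuous_const.sub continuous_id))
  have hf_zero : ∀ ω x, f ω x = 0 ↔ x ∈ F₁ ω ∧ ξ ω - x ∈ F₂ ω := fun ω x ↦ by
    rw [mem_iff_infEDist_zero_of_closed (hcl₁ ω), mem_iff_infEDist_zero_of_closed (hcl₂ ω),
      ← add_eq_zero]
  obtain ⟨g, hg, hgf⟩ := (effrosMeasurable_setOf_eq_zero hf_measurable
    hf_continuous).exists_measurable_selection fun ω ↦ isClosed_singleton.preimage (hf_continuous ω)
  refine ⟨g, hg, fun ω hω ↦ (hf_zero ω _).1 (hgf ω ?_)⟩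
  obtain ⟨a, ha, b, hb, hab⟩ := hω
  exact ⟨a, (hf_zero ω a).2 ⟨ha, by simpa [← hab] using hb⟩⟩

theorem L0_sum_of_setValued_sum_general {m : MeasurableSpace Ω} (P : Measure Ω)
    (H : MeasurableSpace Ω) {F₁ F₂ F : Ω → Set E} (hF₁ : @EffrosMeasurable Ω E H _ F₁)
    (hF₂ : @EffrosMeasurable Ω E H _ F₂) (hcl₁ : ∀ ω, IsClosed (F₁ ω))
    (hcl₂ : ∀ ω, IsClosed (F₂ ω)) (hsum : ∀ᵐ ω ∂P, F₁ ω + F₂ ω = F ω) {ξ : Ω → E} :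
    (Measurable[H] ξ ∧ ∀ᵐ ω ∂P, ξ ω ∈ F ω) ↔
      ∃ ξ₁ ξ₂ : Ω → E, Measurable[H] ξ₁ ∧ Measurable[H] ξ₂ ∧
        (∀ᵐ ω ∂P, ξ₁ ω ∈ F₁ ω) ∧ (∀ᵐ ω ∂P, ξ₂ ω ∈ F₂ ω) ∧ ξ = ξ₁ + ξ₂ := by
  constructor
  · rintro ⟨hξ, hξF⟩
    obtain ⟨g, hg, hgF⟩ := hF₁.exists_measurable_sub_mem hF₂ hcl₁ hcl₂ hξ
    have hgF' : ∀ᵐ ω ∂P, g ω ∈ F₁ ω ∧ ξ ω - g ω ∈ F₂ ω := by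
      filter_upwards [hξF, hsum] with ω hω hsumω using hgF ω (hsumω ▸ hω)
    exact ⟨g, ξ - g, hg, hξ.sub hg, hgF'.mono fun _ ↦ And.left, hgF'.mono fun _ ↦ And.right,
      (add_sub_cancel g ξ).symm⟩
  · rintro ⟨ξ₁, ξ₂, hξ₁, hξ₂, hξ₁F, hξ₂F, rfl⟩
    refine ⟨hξ₁.add hξ₂, ?_⟩
    filter_upwards [hξ₁F, hξ₂F, hsum] with ω h₁ h₂ hsumω using hsumω ▸ add_mem_add h₁ h₂

end Sum

/-- Lemma 2: if `ℋ`-measurable set-valued maps `F₁, F₂, F` with nonempty closed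
values in `ℝ^d` satisfy `F₁(ω) + F₂(ω) = F(ω)` a.e. (Minkowski sum), then
`L⁰(F₁,ℋ) + L⁰(F₂,ℋ) = L⁰(F,ℋ)`: an `ℋ`-measurable `ξ` satisfies `ξ(ω) ∈ F(ω)`
a.e. iff `ξ = ξ₁ + ξ₂` with `ξᵢ` `ℋ`-measurable and `ξᵢ(ω) ∈ Fᵢ(ω)` a.e. -/
theorem L0_sum_of_setValued_sum
    {Ω : Type*} {d : ℕ} {m : MeasurableSpace Ω} (P : Measure Ω)
    [IsProbabilityMeasure P]
    (H : MeasurableSpace Ω) (hHm : H ≤ m)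
    (hcomplete : ∀ s : Set Ω, MeasurableSet[m] s → P s = 0 → MeasurableSet[H] s)
    (F₁ F₂ F : Ω → Set (Fin d → ℝ))
    (hF₁ : SetValuedMeasurable H F₁) (hF₂ : SetValuedMeasurable H F₂)
    (hF : SetValuedMeasurable H F)
    (hne₁ : ∀ ω, (F₁ ω).Nonempty) (hne₂ : ∀ ω, (F₂ ω).Nonempty)
    (hne : ∀ ω, (F ω).Nonempty)
    (hcl₁ : ∀ ω, IsClosed (F₁ ω)) (hcl₂ : ∀ ω, IsClosed (F₂ ω))
    (hcl : ∀ ω, IsClosed (F ω))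
    (hsum : ∀ᵐ ω ∂P, F₁ ω + F₂ ω = F ω) :
    ∀ ξ : Ω → Fin d → ℝ,
      (Measurable[H] ξ ∧ ∀ᵐ ω ∂P, ξ ω ∈ F ω) ↔
      ∃ ξ₁ ξ₂ : Ω → Fin d → ℝ,
        Measurable[H] ξ₁ ∧ Measurable[H] ξ₂ ∧
        (∀ᵐ ω ∂P, ξ₁ ω ∈ F₁ ω) ∧ (∀ᵐ ω ∂P, ξ₂ ω ∈ F₂ ω) ∧
        ξ = ξ₁ + ξ₂ :=
  fun _ ↦ L0_sum_of_setValued_sum_general P H hF₁ hF₂ hcl₁ hcl₂ hsum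
end

section
/- For any nonempty bounded subset A ⊆ ℝ^n, the set H(cl A) is closed and H(cl A) = cl H(A) = cl Ĥ(A), where H(A) = {(λ, λx) : λ ≥ 0, x ∈ A} and Ĥ(A) = {(λ, λx) : λ > 0, x ∈ A} are subsets of ℝ × ℝ^n. -/
/-- The Hörmander transform of a set `A ⊆ ℝⁿ`:
`H(A) = {(λ, λx) : λ ≥ 0, x ∈ A} ⊆ ℝ × ℝⁿ`. -/
def hormander {n : ℕ} (A : Set (Fin n → ℝ)) : Set (ℝ × (Fin n → ℝ)) :=
  {p | ∃ l : ℝ, ∃ x ∈ A, 0 ≤ l ∧ p = (l, l • x)}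

/-- The open variant `Ĥ(A) = {(λ, λx) : λ > 0, x ∈ A}`. -/
def hormanderHat {n : ℕ} (A : Set (Fin n → ℝ)) : Set (ℝ × (Fin n → ℝ)) :=
  {p | ∃ l : ℝ, ∃ x ∈ A, 0 < l ∧ p = (l, l • x)}

/-!
Let `cᵢ → c` and `cᵢ • xᵢ → y` with every `xᵢ` in a von Neumann bounded set `A`. If `c ≠ 0`, then
`xᵢ = cᵢ⁻¹ • cᵢ • xᵢ` converges to `c⁻¹ • y`. If `c = 0`, boundedness alone forces `y = 0`, so any
point of `A` will do. Either way `y ∈ c • closure A`, and no compactness is involved.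
-/

open Set Filter Topology Bornology

section SMul

variable {𝕜 E : Type*} [SMul 𝕜 E]

/-- The Hörmander transform of `A` with scalars restricted to `T`. Taking `T = [0, ∞)` gives `H(A)`
and `T = (0, ∞)` gives `Ĥ(A)`. It is encoded as the image of a product, so that closures can be
computed factor by factor. -/
def hormanderOver (T : Set 𝕜) (A : Set E) : Set (𝕜 × E) :=
  (fun q : 𝕜 × E => (q.1, q.1 • q.2)) '' (T ×ˢ A)

theorem mem_hormanderOver {T : Set 𝕜} {A : Set E} {p : 𝕜 × E} :
    p ∈ hormanderOver T A ↔ ∃ l : 𝕜, ∃ x ∈ A, l ∈ T ∧ p = (l, l • x) := by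
  constructor
  · rintro ⟨⟨l, x⟩, ⟨hl, hx⟩, rfl⟩
    exact ⟨l, x, hx, hl, rfl⟩
  · rintro ⟨l, x, hx, hl, rfl⟩
    exact ⟨(l, x), ⟨hl, hx⟩, rfl⟩

theorem hormanderOver_closure_subset [TopologicalSpace 𝕜] [TopologicalSpace E]
    [ContinuousSMul 𝕜 E] (T : Set 𝕜) (A : Set E) :
    hormanderOver (closure T) (closure A) ⊆ closure (hormanderOver T A) := by
  unfold hormanderOver
  rw [← closure_prod_eq]
  exact image_closure_subset_closure_image (by fun_prop)

end SMul

section NormedField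

variable {𝕜 E : Type*} [NormedField 𝕜] [AddCommGroup E] [Module 𝕜 E] [TopologicalSpace E]
  [ContinuousSMul 𝕜 E] [T2Space E] {A : Set E}

theorem exists_mem_closure_smul_eq_of_tendsto {ι : Type*} {l : Filter ι} [l.NeBot]
    {c : ι → 𝕜} {x : ι → E} {c₀ : 𝕜} {y : E} (hA : IsVonNBounded 𝕜 A) (hx : ∀ᶠ i in l, x i ∈ A)
    (hc : Tendsto c l (𝓝 c₀)) (hcx : Tendsto (fun i => c i • x i) l (𝓝 y)) :
    ∃ a ∈ closure A, c₀ • a = y := by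
  obtain rfl | hc₀ := eq_or_ne c₀ 0
  · obtain ⟨i, hi⟩ := hx.exists
    have hy : y = 0 := tendsto_nhds_unique hcx (hA.smul_tendsto_zero hx hc)
    exact ⟨x i, subset_closure hi, by rw [zero_smul, hy]⟩
  · have hx_lim : Tendsto x l (𝓝 (c₀⁻¹ • y)) := by
      refine ((hc.inv₀ hc₀).smul hcx).congr' ?_
      filter_upwards [hc.eventually_ne hc₀] with i hi
      exact inv_smul_smul₀ hi (x i)
    exact ⟨c₀⁻¹ • y, mem_closure_of_tendsto hx_lim hx, smul_inv_smul₀ hc₀ y⟩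

theorem closure_hormanderOver (T : Set 𝕜) (hA : IsVonNBounded 𝕜 A) :
    closure (hormanderOver T A) = hormanderOver (closure T) (closure A) := by
  refine Subset.antisymm (fun ⟨c₀, y⟩ hp => ?_) (hormanderOver_closure_subset T A)
  rw [hormanderOver, mem_closure_iff_clusterPt, ← map_principal] at hp
  obtain ⟨U, hU, hlim⟩ := mapClusterPt_iff_ultrafilter.mp hp
  have hmem : ∀ᶠ q in (U : Filter (𝕜 × E)), q ∈ T ×ˢ A := le_principal_iff.mp hU
  have hc : Tendsto Prod.fst (U : Filter (𝕜 × E)) (𝓝 c₀) := hlim.fst_nhds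
  have hcx : Tendsto (fun q : 𝕜 × E => q.1 • q.2) (U : Filter (𝕜 × E)) (𝓝 y) := hlim.snd_nhds
  obtain ⟨a, ha, rfl⟩ :=
    exists_mem_closure_smul_eq_of_tendsto hA (hmem.mono fun _ hq => hq.2) hc hcx
  have hc₀ : c₀ ∈ closure T := mem_closure_of_tendsto hc (hmem.mono fun _ hq => hq.1)
  exact ⟨(c₀, a), ⟨hc₀, ha⟩, rfl⟩

end NormedField

theorem hormander_closure_of_bounded_general {E : Type*} [AddCommGroup E] [Module ℝ E]
    [TopologicalSpace E] [ContinuousSMul ℝ E] [T2Space E] {A : Set E} (hA : IsVonNBounded ℝ A) :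
    IsClosed (hormanderOver (Ici (0 : ℝ)) (closure A)) ∧
      hormanderOver (Ici (0 : ℝ)) (closure A) = closure (hormanderOver (Ici (0 : ℝ)) A) ∧
      closure (hormanderOver (Ici (0 : ℝ)) A) = closure (hormanderOver (Ioi (0 : ℝ)) A) := by
  have hIci : closure (hormanderOver (Ici (0 : ℝ)) A) = hormanderOver (Ici 0) (closure A) := by
    rw [closure_hormanderOver _ hA, closure_Ici]
  have hIoi : closure (hormanderOver (Ioi (0 : ℝ)) A) = hormanderOver (Ici 0) (closure A) := by
    rw [closure_hormanderOver _ hA, closure_Ioi]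
  exact ⟨hIci ▸ isClosed_closure, hIci.symm, hIci.trans hIoi.symm⟩

theorem hormander_eq_hormanderOver_Ici {n : ℕ} (A : Set (Fin n → ℝ)) :
    hormander A = hormanderOver (Ici (0 : ℝ)) A :=
  ext fun _ => mem_hormanderOver.symm

theorem hormanderHat_eq_hormanderOver_Ioi {n : ℕ} (A : Set (Fin n → ℝ)) :
    hormanderHat A = hormanderOver (Ioi (0 : ℝ)) A :=
  ext fun _ => mem_hormanderOver.symm

/-- For a nonempty bounded `A ⊆ ℝⁿ`, the set `H(cl A)` is closed and
`H(cl A) = cl H(A) = cl Ĥ(A)`. -/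
theorem hormander_closure_of_bounded {n : ℕ} (A : Set (Fin n → ℝ))
    (hne : A.Nonempty) (hbd : Bornology.IsBounded A) :
    IsClosed (hormander (closure A)) ∧
      hormander (closure A) = closure (hormander A) ∧
      closure (hormander A) = closure (hormanderHat A) := by
  simp only [hormander_eq_hormanderOver_Ici, hormanderHat_eq_hormanderOver_Ioi]
  exact hormander_closure_of_bounded_general ((NormedSpace.isVonNBounded_iff ℝ).mpr hbd)
end

section
/- For any nonempty convex subset A ⊆ ℝ^n, one has ri Ĥ(A) = ri H(A) = Ĥ(ri A), where H(A) = {(λ, λx) : λ ≥ 0, x ∈ A} and Ĥ(A) = {(λ, λx) : λ > 0, x ∈ A} are subsets of ℝ × ℝ^n and ri denotes relative interior. -/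
/-!
On the half-space `0 < l` the Hörmander transform is the preimage of `A` under the perspective map
`(l, y) ↦ l⁻¹ • y`, and its affine span is, off the hyperplane `l = 0`, the preimage of the affine
span of `A`. Since the perspective map is continuous and has the continuous sections
`x ↦ (l, l • x)`, membership in the relative interior can be tested after applying it. No point of
the hyperplane `l = 0` is relatively interior: the linear functional `l` is nonnegative on the
transform and positive somewhere, so it cannot vanish at a relatively interior point.
-/

open Filter Set Topology

section IntrinsicInterior

variable {𝕜 V P : Type*} [AddCommGroup V] [TopologicalSpace P] [AddTorsor V P] {s : Set P} {p q : P}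

theorem mem_intrinsicInterior_iff_mem_nhdsWithin [Ring 𝕜] [Module 𝕜 V] :
    p ∈ intrinsicInterior 𝕜 s ↔ p ∈ affineSpan 𝕜 s ∧ s ∈ 𝓝[affineSpan 𝕜 s] p := by
  simp only [mem_intrinsicInterior, mem_interior_iff_mem_nhds]
  constructor
  · rintro ⟨y, hy, rfl⟩
    exact ⟨y.2, preimage_coe_mem_nhds_subtype.1 hy⟩
  · rintro ⟨hp, hs⟩
    exact ⟨⟨p, hp⟩, preimage_coe_mem_nhds_subtype.2 hs, rfl⟩

theorem eventually_lineMap_mem_of_mem_intrinsicInterior [Ring 𝕜] [Module 𝕜 V] [TopologicalSpace 𝕜]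
    [TopologicalSpace V] [IsTopologicalAddTorsor P] [ContinuousSMul 𝕜 V]
    (hp : p ∈ intrinsicInterior 𝕜 s) (hq : q ∈ affineSpan 𝕜 s) :
    ∀ᶠ t in 𝓝 (0 : 𝕜), AffineMap.lineMap p q t ∈ s := by
  obtain ⟨hp, hs⟩ := mem_intrinsicInterior_iff_mem_nhdsWithin.1 hp
  have hline : Tendsto (AffineMap.lineMap p q : 𝕜 → P) (𝓝 0) (𝓝[affineSpan 𝕜 s] p) :=
    tendsto_nhdsWithin_iff.2 ⟨AffineMap.lineMap_continuous.tendsto' 0 p (by simp),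
      Eventually.of_forall fun t ↦ AffineMap.lineMap_mem t hp hq⟩
  exact hline.eventually hs

theorem pos_of_mem_intrinsicInterior [Field 𝕜] [LinearOrder 𝕜] [IsStrictOrderedRing 𝕜]
    [TopologicalSpace 𝕜] [OrderTopology 𝕜] [Module 𝕜 V] [TopologicalSpace V]
    [IsTopologicalAddTorsor P] [ContinuousSMul 𝕜 V] (f : P →ᵃ[𝕜] 𝕜)
    (hf : ∀ x ∈ s, 0 ≤ f x) (hq : q ∈ s) (hfq : 0 < f q) (hp : p ∈ intrinsicInterior 𝕜 s) :
    0 < f p := by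
  refine (hf p (intrinsicInterior_subset hp)).lt_of_ne' fun hfp ↦ ?_
  obtain ⟨t, hts, ht⟩ :=
    (((eventually_lineMap_mem_of_mem_intrinsicInterior hp
      (subset_affineSpan 𝕜 s hq)).filter_mono nhdsWithin_le_nhds).and
        (self_mem_nhdsWithin (s := Iio 0))).exists
  have hft : f (AffineMap.lineMap p q t) = t * f q := by
    simp [AffineMap.lineMap_apply, hfp]
  exact (mul_neg_of_neg_of_pos ht hfq).not_ge (hft ▸ hf _ hts)

end IntrinsicInterior

section Perspective

variable {𝕜 E : Type*} [DivisionRing 𝕜] [AddCommGroup E] [Module 𝕜 E]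

/-- The perspective map `(l, y) ↦ l⁻¹ • y` of convex analysis, which inverts `x ↦ (l, l • x)`.
It is totalized by the value `0` on the hyperplane `l = 0`. -/
def perspective (p : 𝕜 × E) : E :=
  p.1⁻¹ • p.2

theorem perspective_mk_smul {l : 𝕜} (hl : l ≠ 0) (x : E) : perspective (l, l • x) = x :=
  inv_smul_smul₀ hl x

theorem mk_smul_perspective {p : 𝕜 × E} (hp : p.1 ≠ 0) : (p.1, p.1 • perspective p) = p :=
  Prod.ext rfl (smul_inv_smul₀ hp p.2)

theorem map_perspective_nhds [TopologicalSpace 𝕜] [ContinuousInv₀ 𝕜] [TopologicalSpace E]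
    [ContinuousSMul 𝕜 E] {p : 𝕜 × E} (hp : p.1 ≠ 0) :
    map perspective (𝓝 p) = 𝓝 (perspective p) := by
  have hcont : ContinuousAt perspective p :=
    (continuousAt_fst.inv₀ hp).smul continuousAt_snd
  have hsection : Tendsto (fun x : E ↦ (p.1, p.1 • x)) (𝓝 (perspective p)) (𝓝 p) :=
    Continuous.tendsto' (by fun_prop) _ _ (mk_smul_perspective hp)
  refine le_antisymm hcont ?_
  calc 𝓝 (perspective p)
      = map perspective (map (fun x : E ↦ (p.1, p.1 • x)) (𝓝 (perspective p))) := by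
        simp only [map_map, Function.comp_def, perspective_mk_smul hp, map_id']
    _ ≤ map perspective (𝓝 p) := map_mono hsection

theorem preimage_perspective_mem_nhdsWithin_iff [TopologicalSpace 𝕜] [ContinuousInv₀ 𝕜]
    [TopologicalSpace E] [ContinuousSMul 𝕜 E] {p : 𝕜 × E} (hp : p.1 ≠ 0) {A T : Set E} :
    perspective ⁻¹' A ∈ 𝓝[perspective ⁻¹' T] p ↔ A ∈ 𝓝[T] (perspective p) := by
  rw [← mem_map, nhdsWithin, map_inf_principal_preimage, map_perspective_nhds hp, nhdsWithin]

end Perspective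

section HormanderTransform

variable (𝕜 : Type*) {E : Type*} [Field 𝕜] [LinearOrder 𝕜] [AddCommGroup E] [Module 𝕜 E]

/-- The Hörmander transform `H(A)` of a subset of a vector space over an ordered field. -/
def hormanderTransform (A : Set E) : Set (𝕜 × E) :=
  {p | ∃ l : 𝕜, ∃ x ∈ A, 0 ≤ l ∧ p = (l, l • x)}

/-- The open Hörmander transform `Ĥ(A)` of a subset of a vector space over an ordered field. -/
def openHormanderTransform (A : Set E) : Set (𝕜 × E) :=
  {p | ∃ l : 𝕜, ∃ x ∈ A, 0 < l ∧ p = (l, l • x)}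

variable {𝕜} {A : Set E} {S : Set (𝕜 × E)} {p : 𝕜 × E}

theorem openHormanderTransform_subset_hormanderTransform :
    openHormanderTransform 𝕜 A ⊆ hormanderTransform 𝕜 A :=
  fun _ ⟨l, x, hx, hl, hp⟩ ↦ ⟨l, x, hx, hl.le, hp⟩

theorem fst_nonneg_of_mem_hormanderTransform (hp : p ∈ hormanderTransform 𝕜 A) : 0 ≤ p.1 := by
  obtain ⟨l, x, -, hl, rfl⟩ := hp
  exact hl

theorem perspective_mem_of_mem_hormanderTransform (hp : p ∈ hormanderTransform 𝕜 A)
    (hp₀ : p.1 ≠ 0) : perspective p ∈ A := by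
  obtain ⟨l, x, hx, -, rfl⟩ := hp
  rwa [perspective_mk_smul hp₀]

theorem mem_openHormanderTransform_iff :
    p ∈ openHormanderTransform 𝕜 A ↔ 0 < p.1 ∧ perspective p ∈ A := by
  constructor
  · rintro ⟨l, x, hx, hl, rfl⟩
    exact ⟨hl, (perspective_mk_smul hl.ne' x).symm ▸ hx⟩
  · rintro ⟨hp, hpA⟩
    exact ⟨p.1, perspective p, hpA, hp, (mk_smul_perspective hp.ne').symm⟩

theorem mem_iff_perspective_mem (hS : openHormanderTransform 𝕜 A ⊆ S)
    (hS' : S ⊆ hormanderTransform 𝕜 A) (hp : 0 < p.1) : p ∈ S ↔ perspective p ∈ A :=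
  ⟨fun h ↦ perspective_mem_of_mem_hormanderTransform (hS' h) hp.ne',
    fun h ↦ hS (mem_openHormanderTransform_iff.2 ⟨hp, h⟩)⟩

theorem perspective_mem_affineSpan (hp : p ∈ affineSpan 𝕜 (hormanderTransform 𝕜 A))
    (hp₀ : p.1 ≠ 0) : perspective p ∈ affineSpan 𝕜 A := by
  obtain ⟨_, _, x, hxA, -, -⟩ := (affineSpan_nonempty 𝕜).1 ⟨p, hp⟩
  have hx : x ∈ affineSpan 𝕜 A := subset_affineSpan 𝕜 A hxA
  let f : 𝕜 × E →ₗ[𝕜] E := LinearMap.snd 𝕜 𝕜 E - (LinearMap.fst 𝕜 𝕜 E).smulRight x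
  have hspan : affineSpan 𝕜 (hormanderTransform 𝕜 A) ≤
      ((affineSpan 𝕜 A).direction.comap f).toAffineSubspace := by
    rw [affineSpan_le]
    rintro _ ⟨l, y, hy, -, rfl⟩
    change l • y - l • x ∈ (affineSpan 𝕜 A).direction
    rw [← smul_sub]
    exact Submodule.smul_mem _ _
      (AffineSubspace.vsub_mem_direction (subset_affineSpan 𝕜 A hy) hx)
  have hdir : p.2 - p.1 • x ∈ (affineSpan 𝕜 A).direction := hspan hp
  have hpersp : perspective p = p.1⁻¹ • (p.2 - p.1 • x) +ᵥ x := by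
    rw [smul_sub, inv_smul_smul₀ hp₀, vadd_eq_add, sub_add_cancel, perspective]
  rw [hpersp]
  exact AffineSubspace.vadd_mem_of_mem_direction (Submodule.smul_mem _ _ hdir) hx

variable [IsStrictOrderedRing 𝕜]

theorem mk_smul_mem_affineSpan_openHormanderTransform {x : E} (hx : x ∈ affineSpan 𝕜 A) (l : 𝕜) :
    (l, l • x) ∈ affineSpan 𝕜 (openHormanderTransform 𝕜 A) := by
  let f : E →ᵃ[𝕜] 𝕜 × E :=
    (AffineMap.const 𝕜 E l).prod (l • (LinearMap.id : E →ₗ[𝕜] E)).toAffineMap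
  suffices affineSpan 𝕜 A ≤ (affineSpan 𝕜 (openHormanderTransform 𝕜 A)).comap f from this hx
  rw [affineSpan_le]
  intro y hy
  have hmem : ∀ m : 𝕜, 0 < m → (m, m • y) ∈ affineSpan 𝕜 (openHormanderTransform 𝕜 A) :=
    fun m hm ↦ subset_affineSpan 𝕜 (openHormanderTransform 𝕜 A) ⟨m, y, hy, hm, rfl⟩
  have hline : f y = AffineMap.lineMap ((1 : 𝕜), (1 : 𝕜) • y) ((2 : 𝕜), (2 : 𝕜) • y) (l - 1) := by
    rw [AffineMap.lineMap_apply_module]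
    exact Prod.ext (show l = (1 - (l - 1)) * 1 + (l - 1) * 2 by ring)
      (show l • y = (1 - (l - 1)) • (1 : 𝕜) • y + (l - 1) • (2 : 𝕜) • y by module)
  change f y ∈ affineSpan 𝕜 (openHormanderTransform 𝕜 A)
  rw [hline]
  exact AffineMap.lineMap_mem (l - 1) (hmem 1 one_pos) (hmem 2 two_pos)

theorem mem_affineSpan_iff_perspective_mem (hS : openHormanderTransform 𝕜 A ⊆ S)
    (hS' : S ⊆ hormanderTransform 𝕜 A) (hp : p.1 ≠ 0) :
    p ∈ affineSpan 𝕜 S ↔ perspective p ∈ affineSpan 𝕜 A := by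
  refine ⟨fun h ↦ perspective_mem_affineSpan (affineSpan_mono 𝕜 hS' h) hp, fun h ↦ ?_⟩
  rw [← mk_smul_perspective hp]
  exact affineSpan_mono 𝕜 hS (mk_smul_mem_affineSpan_openHormanderTransform h p.1)

variable [TopologicalSpace 𝕜] [OrderTopology 𝕜] [TopologicalSpace E] [ContinuousSMul 𝕜 E]

theorem mem_intrinsicInterior_iff_perspective_mem (hS : openHormanderTransform 𝕜 A ⊆ S)
    (hS' : S ⊆ hormanderTransform 𝕜 A) (hp : 0 < p.1) :
    p ∈ intrinsicInterior 𝕜 S ↔ perspective p ∈ intrinsicInterior 𝕜 A := by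
  have hpos : ∀ᶠ q : 𝕜 × E in 𝓝 p, 0 < q.1 := continuousAt_fst.eventually (lt_mem_nhds hp)
  have hS_eq : S =ᶠ[𝓝 p] perspective ⁻¹' A := by
    filter_upwards [hpos] with q hq using propext (mem_iff_perspective_mem hS hS' hq)
  have hspan_eq : (affineSpan 𝕜 S : Set (𝕜 × E)) =ᶠ[𝓝 p]
      perspective ⁻¹' (affineSpan 𝕜 A : Set E) := by
    filter_upwards [hpos] with q hq
      using propext (mem_affineSpan_iff_perspective_mem hS hS' hq.ne')
  have hnhds : S ∈ 𝓝[affineSpan 𝕜 S] p ↔ A ∈ 𝓝[affineSpan 𝕜 A] (perspective p) := by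
    rw [nhdsWithin_eq_iff_eventuallyEq.2 hspan_eq,
      congr_sets (hS_eq.filter_mono nhdsWithin_le_nhds).mem_iff,
      preimage_perspective_mem_nhdsWithin_iff hp.ne']
  rw [mem_intrinsicInterior_iff_mem_nhdsWithin, mem_intrinsicInterior_iff_mem_nhdsWithin, hnhds,
    mem_affineSpan_iff_perspective_mem hS hS' hp.ne']

variable [IsTopologicalAddGroup E]

theorem fst_pos_of_mem_intrinsicInterior (hS : openHormanderTransform 𝕜 A ⊆ S)
    (hS' : S ⊆ hormanderTransform 𝕜 A) (hp : p ∈ intrinsicInterior 𝕜 S) : 0 < p.1 := by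
  obtain ⟨_, x, hx, -, -⟩ := hS' (intrinsicInterior_subset hp)
  have hq : ((1 : 𝕜), (1 : 𝕜) • x) ∈ S := hS ⟨1, x, hx, one_pos, rfl⟩
  exact pos_of_mem_intrinsicInterior (LinearMap.fst 𝕜 𝕜 E).toAffineMap
    (fun _ hy ↦ fst_nonneg_of_mem_hormanderTransform (hS' hy)) hq one_pos hp

theorem intrinsicInterior_eq_openHormanderTransform (hS : openHormanderTransform 𝕜 A ⊆ S)
    (hS' : S ⊆ hormanderTransform 𝕜 A) :
    intrinsicInterior 𝕜 S = openHormanderTransform 𝕜 (intrinsicInterior 𝕜 A) := by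
  ext p
  rw [mem_openHormanderTransform_iff]
  constructor
  · intro hp
    have hpos := fst_pos_of_mem_intrinsicInterior hS hS' hp
    exact ⟨hpos, (mem_intrinsicInterior_iff_perspective_mem hS hS' hpos).1 hp⟩
  · rintro ⟨hpos, hp⟩
    exact (mem_intrinsicInterior_iff_perspective_mem hS hS' hpos).2 hp

theorem hormander_relativeInterior_general (A : Set E) :
    intrinsicInterior 𝕜 (openHormanderTransform 𝕜 A) =
        intrinsicInterior 𝕜 (hormanderTransform 𝕜 A) ∧
      intrinsicInterior 𝕜 (hormanderTransform 𝕜 A) =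
        openHormanderTransform 𝕜 (intrinsicInterior 𝕜 A) := by
  have hsub := openHormanderTransform_subset_hormanderTransform (𝕜 := 𝕜) (A := A)
  have hopen := intrinsicInterior_eq_openHormanderTransform subset_rfl hsub
  have hclosed := intrinsicInterior_eq_openHormanderTransform hsub subset_rfl
  exact ⟨hopen.trans hclosed.symm, hclosed⟩

end HormanderTransform

/-- For a nonempty convex `A ⊆ ℝⁿ`, `ri Ĥ(A) = ri H(A) = Ĥ(ri A)`,
where `ri` denotes the relative interior. -/
theorem hormander_relativeInterior {n : ℕ} (A : Set (Fin n → ℝ))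
    (hne : A.Nonempty) (hconv : Convex ℝ A) :
    intrinsicInterior ℝ (hormanderHat A) = intrinsicInterior ℝ (hormander A) ∧
      intrinsicInterior ℝ (hormander A) = hormanderHat (intrinsicInterior ℝ A) := by
  exact hormander_relativeInterior_general A
end
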